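/- Assume additionally that ‖∇_θ ℓ(W_θ, z)‖ ≤ L for all θ ∈ ℝ^d and z ∈ 𝒵 (i.e., ℓ is L-Lipschitz in the parameter) and that every batch has constant size |V_t| = K. Then, for any choice of measurable estimate functions π_{J,t} as in the setting, the expected generalization error of SGLD satisfies E_{P_{W,S}}[gen(W, S)] ≤ (2L/K)(b − a) · E_{(J, S̃, U, V^T)}[ sqrt( Σ_{t ∈ 𝒯_J(V^T)} E_t[ (η_t²/σ_t²) (U_J − π_{J,t})² ] ) ], where E_t[·] denotes conditional expectation given (J, U, S̃, V_1, …, V_T). -/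

import Mathlib

open MeasureTheory ProbabilityTheory ENNReal Classical


/-- Discrete σ-algebra on finsets (finite, hence standard Borel). -/
instance {α : Type*} : MeasurableSpace (Finset α) := ⊤

/-- Discrete σ-algebra on `Option Bool`. -/
instance : MeasurableSpace (Option Bool) := ⊤

/-- The index `i + u·N` in the super-sample: `Z_i = Z̃_{i + U_i N}`. -/
def subIdx (N : ℕ) (i : Fin N) (u : Bool) : Fin (2 * N) :=
  ⟨i.val + if u then N else 0, by have := i.isLt; cases u <;> simp <;> omega⟩

/-- The Bernoulli(1/2) distribution on `Bool`. -/
noncomputable def bern : Measure Bool := (PMF.bernoulli (1 / 2) (by norm_num)).toMeasure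
/-- pi of withDensity -/
lemma aux_pi_withDensity {ι : Type*} [Fintype ι] (m : ι → Measure ℝ) [∀ i, IsProbabilityMeasure (m i)]
    (ρ : ι → ℝ → ℝ≥0∞) (hρ : ∀ i, Measurable (ρ i))
    [∀ i, IsProbabilityMeasure ((m i).withDensity (ρ i))] :
    Measure.pi (fun i => (m i).withDensity (ρ i)) =
      (Measure.pi m).withDensity (fun x => ∏ i, ρ i (x i)) := by
  refine Measure.pi_eq fun s hs => ?_
  rw [withDensity_apply _ (MeasurableSet.univ_pi hs)]
  rw [← lintegral_indicator (MeasurableSet.univ_pi hs)]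
  have h1 : (fun x : ι → ℝ => (Set.univ.pi s).indicator (fun x => ∏ i, ρ i (x i)) x)
      = fun x => ∏ i, (s i).indicator (ρ i) (x i) := by
    funext x
    by_cases hx : x ∈ Set.univ.pi s
    · rw [Set.indicator_of_mem hx]
      refine Finset.prod_congr rfl fun i _ => ?_
      rw [Set.indicator_of_mem (hx i (Set.mem_univ i))]
    · rw [Set.indicator_of_notMem hx]
      simp only [Set.mem_pi, Set.mem_univ, forall_const, not_forall] at hx
      obtain ⟨i, hi⟩ := hx
      exact (Finset.prod_eq_zero (Finset.mem_univ i) (Set.indicator_of_notMem hi _)).symm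
  rw [h1]
  have hm : ∀ i, Measurable ((s i).indicator (ρ i)) := fun i => (hρ i).indicator (hs i)
  have := lintegral_prod_eq_prod_lintegral_of_indepFun (μ := Measure.pi m) Finset.univ
    (fun i (x : ι → ℝ) => (s i).indicator (ρ i) (x i))
    (iIndepFun_pi (μ := m) (X := fun i => (s i).indicator (ρ i)) fun i => (hm i).aemeasurable)
    (fun i => (hm i).comp (measurable_pi_apply i))
  refine this.trans ?_
  refine Finset.prod_congr rfl fun i _ => ?_
  rw [withDensity_apply _ (hs i), ← lintegral_indicator (hs i)]
  exact (measurePreserving_eval m i).lintegral_comp (hm i)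

lemma aux_gauss_shift (y : ℝ) :
    (gaussianReal 0 1).map (· + y) =
      (gaussianReal 0 1).withDensity (fun x => ENNReal.ofReal (Real.exp (y * x - y ^ 2 / 2))) := by
  rw [gaussianReal_map_add_const, gaussianReal_of_var_ne_zero _ one_ne_zero,
    gaussianReal_of_var_ne_zero _ one_ne_zero, ← withDensity_mul _ (measurable_gaussianPDF _ _)
      (by fun_prop)]
  congr 1
  funext x
  simp only [Pi.mul_apply, gaussianPDF, gaussianPDFReal]
  rw [← ENNReal.ofReal_mul (by positivity), mul_assoc _ (Real.exp _) (Real.exp _), ← Real.exp_add]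
  congr 3
  simp only [NNReal.coe_one]
  ring

lemma aux_pi_shift {ι : Type*} [Fintype ι] (h : ι → ℝ) :
    (Measure.pi fun _ : ι => gaussianReal 0 1).map (fun x => x + h) =
      (Measure.pi fun _ : ι => gaussianReal 0 1).withDensity
        (fun x => ENNReal.ofReal (Real.exp (∑ i, h i * x i - (∑ i, h i ^ 2) / 2))) := by
  have hP : ∀ i, IsProbabilityMeasure ((gaussianReal 0 1).withDensity
      (fun x => ENNReal.ofReal (Real.exp (h i * x - h i ^ 2 / 2)))) := fun i => by
    rw [← aux_gauss_shift]
    exact Measure.isProbabilityMeasure_map (by fun_prop)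
  have h1 := Measure.pi_map_pi (μ := fun _ : ι => gaussianReal 0 1) (f := fun i x => x + h i)
    (fun i => by fun_prop)
  have h2 : (fun x : ι → ℝ => x + h) = fun x i => x i + h i := rfl
  rw [h2, h1]
  simp_rw [aux_gauss_shift]
  rw [aux_pi_withDensity _ _ (fun i => by fun_prop)]
  congr 1
  funext x
  rw [← ENNReal.ofReal_prod_of_nonneg (fun i _ => by positivity), ← Real.exp_sum,
    Finset.sum_sub_distrib, Finset.sum_div]

lemma aux_jensen {α : Type*} [MeasurableSpace α] (m : Measure α) [IsProbabilityMeasure m]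
    (g : α → ℝ) (hg : Integrable g m) (he : Integrable (fun x => Real.exp (g x)) m) :
    ∫ x, g x ∂m ≤ Real.log (∫ x, Real.exp (g x) ∂m) := by
  have h := convexOn_exp.map_integral_le (μ := m) (f := g) Real.continuous_exp.continuousOn
    isClosed_univ (by simp) hg he
  have h' := Real.log_le_log (Real.exp_pos _) h
  rwa [Real.log_exp] at h'

lemma aux_int_bdd {α : Type*} [MeasurableSpace α] (m : Measure α) [IsFiniteMeasure m]
    {g : α → ℝ} (hg : Measurable g) (C : ℝ) (hC : ∀ x, |g x| ≤ C) : Integrable g m :=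
  Integrable.of_bound hg.aestronglyMeasurable C (Filter.Eventually.of_forall hC)

lemma aux_onestep {d : ℕ} (g : EuclideanSpace ℝ (Fin d) → ℝ) (hg : Measurable g)
    (C : ℝ) (hC : ∀ x, |g x| ≤ C) (m m' : EuclideanSpace ℝ (Fin d)) (s : ℝ) (hs : 0 < s) :
    ∫ e, g (m + s • WithLp.toLp 2 e) ∂(Measure.pi fun _ : Fin d => gaussianReal 0 1) ≤
      ‖m - m'‖ ^ 2 / (2 * s ^ 2) +
      Real.log (∫ e, Real.exp (g (m' + s • WithLp.toLp 2 e))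
        ∂(Measure.pi fun _ : Fin d => gaussianReal 0 1)) := by
  set γ := (Measure.pi fun _ : Fin d => gaussianReal 0 1) with hγ
  set h : Fin d → ℝ := fun i => (m i - m' i) / s with hh
  set q : ℝ := ∑ i, h i ^ 2 with hq
  have hqn : q = ‖m - m'‖ ^ 2 / s ^ 2 := by
    rw [EuclideanSpace.norm_sq_eq, hq, Finset.sum_div]
    refine Finset.sum_congr rfl fun i _ => ?_
    simp [hh, div_pow]
  have hms : ∀ m : EuclideanSpace ℝ (Fin d),
      Measurable fun e : Fin d → ℝ => g (m + s • WithLp.toLp 2 e) := fun m =>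
    hg.comp (by fun_prop)
  -- change of variables
  have hcv : ∫ e, Real.exp (g (m' + s • WithLp.toLp 2 e)) ∂γ =
      ∫ e, Real.exp (g (m + s • WithLp.toLp 2 e) - ∑ i, h i * e i - q / 2) ∂γ := by
    have hF : Measurable fun x : Fin d → ℝ =>
        Real.exp (g (m' + s • WithLp.toLp 2 x) - ∑ i, h i * x i + q / 2) :=
      Real.measurable_exp.comp (((hms m').sub (by fun_prop)).add_const _)
    have e1 : ∫ e, Real.exp (g (m + s • WithLp.toLp 2 e) - ∑ i, h i * e i - q / 2) ∂γ =
        ∫ x, Real.exp (g (m' + s • WithLp.toLp 2 x) - ∑ i, h i * x i + q / 2)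
          ∂(γ.map fun x => x + h) := by
      rw [integral_map (by fun_prop) hF.aestronglyMeasurable]
      refine integral_congr_ae (Filter.Eventually.of_forall fun e => ?_)
      simp only
      have e2 : m' + s • WithLp.toLp 2 (e + h) = m + s • WithLp.toLp 2 e := by
        ext i
        simp [hh]
        field_simp
        ring
      rw [e2]
      congr 1
      simp only [Pi.add_apply, mul_add, Finset.sum_add_distrib, hq, pow_two]
      ring
    rw [e1, hγ, aux_pi_shift, integral_withDensity_eq_integral_toReal_smul (by fun_prop)
      (Filter.Eventually.of_forall fun _ => ENNReal.ofReal_lt_top)]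
    refine integral_congr_ae (Filter.Eventually.of_forall fun e => ?_)
    simp only [smul_eq_mul]
    rw [ENNReal.toReal_ofReal (by positivity), ← Real.exp_add]
    congr 1
    simp only [hq]
    ring
  have hli : ∀ i, Integrable (fun e : Fin d → ℝ => h i * e i) γ := fun i => by
    refine Integrable.const_mul ?_ _
    exact integrable_comp_eval (μ := fun _ : Fin d => gaussianReal 0 1) (i := i) (f := fun x => x)
      ((memLp_id_gaussianReal (μ := 0) (v := 1) 1).integrable (by simp))
  have hl0 : ∀ i, ∫ e : Fin d → ℝ, h i * e i ∂γ = 0 := fun i => by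
    rw [integral_const_mul, hγ]
    have := integral_comp_eval (μ := fun _ : Fin d => gaussianReal 0 1) (i := i) (f := fun x : ℝ => x)
      (by fun_prop)
    rw [this]
    simp
  have hgi : Integrable (fun e => g (m + s • WithLp.toLp 2 e)) γ :=
    aux_int_bdd _ (hms m) C fun _ => hC _
  have hsub : Integrable (fun e : Fin d → ℝ => g (m + s • WithLp.toLp 2 e) - ∑ i, h i * e i) γ :=
    hgi.sub (integrable_finsetSum _ fun i _ => hli i)
  have hX : Integrable (fun e : Fin d → ℝ =>
      g (m + s • WithLp.toLp 2 e) - ∑ i, h i * e i - q / 2) γ :=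
    hsub.sub (integrable_const _)
  have hlin : Integrable (fun e : Fin d → ℝ => Real.exp (∑ i, (- h i * e i))) γ := by
    simp_rw [Real.exp_sum]
    exact Integrable.fintype_prod (μ := fun _ : Fin d => gaussianReal 0 1)
      (f := fun i x => Real.exp (- h i * x)) fun i => integrable_exp_mul_gaussianReal _
  have hE : Integrable (fun e : Fin d → ℝ =>
      Real.exp (g (m + s • WithLp.toLp 2 e) - ∑ i, h i * e i - q / 2)) γ := by
    have := hlin.bdd_mul (f := fun e => Real.exp (g (m + s • WithLp.toLp 2 e) - q / 2))
      (c := Real.exp (C - q / 2))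
      (Real.measurable_exp.comp ((hms m).sub_const _)).aestronglyMeasurable
      (Filter.Eventually.of_forall fun e => by
        rw [Real.norm_eq_abs, abs_of_pos (Real.exp_pos _)]
        exact Real.exp_le_exp.2 (by linarith [(abs_le.1 (hC (m + s • WithLp.toLp 2 e))).2]))
    refine this.congr (Filter.Eventually.of_forall fun e => ?_)
    simp only
    rw [← Real.exp_add]
    congr 1
    simp only [neg_mul, Finset.sum_neg_distrib]
    ring
  have hJ := aux_jensen γ _ hX hE
  rw [← hcv, integral_sub hsub (integrable_const _),
    integral_sub hgi (integrable_finsetSum _ fun i _ => hli i),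
    integral_finsetSum _ (fun i _ => hli i)] at hJ
  simp only [hl0, Finset.sum_const_zero, integral_const, smul_eq_mul, probReal_univ] at hJ
  have : ‖m - m'‖ ^ 2 / (2 * s ^ 2) = q / 2 := by rw [hqn]; field_simp
  rw [this]
  linarith

/-- one step of the history: keep times `≤ t`, overwrite the rest -/
def stp {E : Type*} (t : ℕ) (x : ℕ → E) (y : E) : ℕ → E := fun k => if k ≤ t then x k else y

lemma stp_measurable {E α : Type*} [MeasurableSpace E] [MeasurableSpace α] (t : ℕ)
    {f : α → ℕ → E} {g : α → E} (hf : Measurable f) (hg : Measurable g) :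
    Measurable fun p => stp t (f p) (g p) := by
  refine measurable_pi_lambda _ fun k => ?_
  unfold stp
  by_cases h : k ≤ t
  · simp only [h, if_true]; exact (measurable_pi_apply k).comp hf
  · simp only [h, if_false]; exact hg

/-- standard gaussian on `Fin d → ℝ` -/
noncomputable abbrev gam (d : ℕ) : Measure (Fin d → ℝ) := Measure.pi fun _ : Fin d => gaussianReal 0 1

/-- trajectory kernel -/
noncomputable def trajK {C : Type*} [MeasurableSpace C] {d : ℕ}
    (ρ : Measure (EuclideanSpace ℝ (Fin d)))
    (A : ℕ → C → (ℕ → EuclideanSpace ℝ (Fin d)) → EuclideanSpace ℝ (Fin d)) (σ : ℕ → ℝ) :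
    ℕ → Kernel C (ℕ → EuclideanSpace ℝ (Fin d))
  | 0 => Kernel.const C (ρ.map (fun x _ => x))
  | t + 1 => (Kernel.id ×ₖ (trajK ρ A σ t ×ₖ Kernel.const C (gam d))).map
      (fun p => stp t p.2.1 (A t p.1 p.2.1 + σ t • WithLp.toLp 2 p.2.2))

section traj
variable {C : Type*} [MeasurableSpace C] {d : ℕ}
    (ρ : Measure (EuclideanSpace ℝ (Fin d))) [IsProbabilityMeasure ρ]
    (A B : ℕ → C → (ℕ → EuclideanSpace ℝ (Fin d)) → EuclideanSpace ℝ (Fin d)) (σ : ℕ → ℝ)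

lemma trajK_step_meas {A : ℕ → C → (ℕ → EuclideanSpace ℝ (Fin d)) → EuclideanSpace ℝ (Fin d)}
    (hA : ∀ t, Measurable fun p : C × (ℕ → EuclideanSpace ℝ (Fin d)) => A t p.1 p.2)
    (t : ℕ) : Measurable
    (fun p : C × ((ℕ → EuclideanSpace ℝ (Fin d)) × (Fin d → ℝ)) =>
      stp t p.2.1 (A t p.1 p.2.1 + σ t • WithLp.toLp 2 p.2.2)) := by
  refine stp_measurable t (by fun_prop) ?_
  refine Measurable.add ((hA t).comp (by fun_prop : Measurable fun p :
    C × ((ℕ → EuclideanSpace ℝ (Fin d)) × (Fin d → ℝ)) => (p.1, p.2.1))) (by fun_prop)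

lemma trajK_step_meas' {A : ℕ → C → (ℕ → EuclideanSpace ℝ (Fin d)) → EuclideanSpace ℝ (Fin d)}
    (hA : ∀ t, Measurable fun p : C × (ℕ → EuclideanSpace ℝ (Fin d)) => A t p.1 p.2)
    (t : ℕ) (c : C) : Measurable
    (fun p : (ℕ → EuclideanSpace ℝ (Fin d)) × (Fin d → ℝ) =>
      stp t p.1 (A t c p.1 + σ t • WithLp.toLp 2 p.2)) :=
  (trajK_step_meas σ hA t).comp (by fun_prop : Measurable fun p :
    (ℕ → EuclideanSpace ℝ (Fin d)) × (Fin d → ℝ) => (c, p))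

lemma trajK_markov
    (hA : ∀ t, Measurable fun p : C × (ℕ → EuclideanSpace ℝ (Fin d)) => A t p.1 p.2)
    (t : ℕ) : IsMarkovKernel (trajK ρ A σ t) := by
  induction t with
  | zero =>
    have : IsProbabilityMeasure (ρ.map (fun x (_ : ℕ) => x)) :=
      Measure.isProbabilityMeasure_map (by fun_prop)
    unfold trajK; infer_instance
  | succ t ih =>
    unfold trajK
    exact Kernel.IsMarkovKernel.map _ (trajK_step_meas σ hA t)

lemma trajK_succ_apply
    (hA : ∀ t, Measurable fun p : C × (ℕ → EuclideanSpace ℝ (Fin d)) => A t p.1 p.2)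
    (t : ℕ) (c : C) : trajK ρ A σ (t + 1) c =
    ((trajK ρ A σ t c).prod (gam d)).map
      (fun p => stp t p.1 (A t c p.1 + σ t • WithLp.toLp 2 p.2)) := by
  have := trajK_markov ρ A σ hA t
  rw [trajK, Kernel.map_apply _ (trajK_step_meas σ hA t), Kernel.prod_apply, Kernel.prod_apply,
    Kernel.id_apply, Kernel.const_apply, Measure.dirac_prod,
    Measure.map_map (trajK_step_meas σ hA t) measurable_prodMk_left]
  rfl

lemma trajK_integral_succ
    (hA : ∀ t, Measurable fun p : C × (ℕ → EuclideanSpace ℝ (Fin d)) => A t p.1 p.2)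
    (t : ℕ) (c : C) (g : (ℕ → EuclideanSpace ℝ (Fin d)) → ℝ)
    (hg : Measurable g) (M : ℝ) (hM : ∀ x, |g x| ≤ M) :
    ∫ x, g x ∂(trajK ρ A σ (t + 1) c) =
      ∫ x, ∫ e, g (stp t x (A t c x + σ t • WithLp.toLp 2 e)) ∂(gam d) ∂(trajK ρ A σ t c) := by
  have := trajK_markov ρ A σ hA t
  have hs := trajK_step_meas' σ hA t c
  rw [trajK_succ_apply ρ A σ hA, integral_map hs.aemeasurable hg.aestronglyMeasurable,
    integral_prod (fun p : (ℕ → EuclideanSpace ℝ (Fin d)) × (Fin d → ℝ) =>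
      g (stp t p.1 (A t c p.1 + σ t • WithLp.toLp 2 p.2)))
      (aux_int_bdd _ (hg.comp hs) M fun _ => hM _)]

lemma trajK_DV
    (hA : ∀ t, Measurable fun p : C × (ℕ → EuclideanSpace ℝ (Fin d)) => A t p.1 p.2)
    (hB : ∀ t, Measurable fun p : C × (ℕ → EuclideanSpace ℝ (Fin d)) => B t p.1 p.2)
    (hσ : ∀ t, 0 < σ t) (c : C) (M : ℕ → ℝ) (hM : ∀ t x, ‖A t c x - B t c x‖ ≤ M t)
    (t : ℕ) : ∀ (g : (ℕ → EuclideanSpace ℝ (Fin d)) → ℝ) (_ : Measurable g) (D : ℝ)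
      (_ : ∀ x, |g x| ≤ D),
    ∫ x, g x ∂(trajK ρ A σ t c) ≤
      ∑ s ∈ Finset.range t, ∫ x, ‖A s c x - B s c x‖ ^ 2 / (2 * σ s ^ 2) ∂(trajK ρ A σ s c) +
      Real.log (∫ x, Real.exp (g x) ∂(trajK ρ B σ t c)) := by
  induction t with
  | zero =>
    intro g hg D hD
    have : IsProbabilityMeasure (ρ.map (fun x (_ : ℕ) => x)) :=
      Measure.isProbabilityMeasure_map (by fun_prop)
    have h := aux_jensen (ρ.map (fun x (_ : ℕ) => x)) g (aux_int_bdd _ hg D hD)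
      (aux_int_bdd _ (Real.measurable_exp.comp hg) (Real.exp D) fun x => by
        rw [abs_of_pos (Real.exp_pos _)]
        exact Real.exp_le_exp.2 (abs_le.1 (hD x)).2)
    simpa [trajK] using h
  | succ t ih =>
    intro g hg D hD
    have hKA := trajK_markov ρ A σ hA t
    have hKB := trajK_markov ρ B σ hB t
    have hexpb : ∀ x, |Real.exp (g x)| ≤ Real.exp D := fun x => by
      rw [abs_of_pos (Real.exp_pos _)]
      exact Real.exp_le_exp.2 (abs_le.1 (hD x)).2
    have hexpb' : ∀ x, Real.exp (-D) ≤ Real.exp (g x) := fun x =>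
      Real.exp_le_exp.2 (abs_le.1 (hD x)).1
    have hem : Measurable fun x => Real.exp (g x) := Real.measurable_exp.comp hg
    set w : (ℕ → EuclideanSpace ℝ (Fin d)) → ℝ := fun x =>
      ∫ e, Real.exp (g (stp t x (B t c x + σ t • WithLp.toLp 2 e))) ∂(gam d) with hw
    have hstB := trajK_step_meas' σ hB t c
    have hwm : Measurable w :=
      (StronglyMeasurable.integral_prod_right
        (f := fun x e => Real.exp (g (stp t x (B t c x + σ t • WithLp.toLp 2 e))))
        (hem.comp hstB).stronglyMeasurable).measurable
    have hIntg : ∀ x, Integrable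
        (fun e => Real.exp (g (stp t x (B t c x + σ t • WithLp.toLp 2 e)))) (gam d) := fun x =>
      aux_int_bdd _ ((hem.comp hstB).comp (by fun_prop : Measurable fun e : Fin d → ℝ => (x, e)))
        (Real.exp D) fun e => hexpb _
    have hwl : ∀ x, Real.exp (-D) ≤ w x := fun x => by
      have := integral_mono (integrable_const (Real.exp (-D))) (hIntg x) fun e => hexpb' _
      simpa using this
    have hwu : ∀ x, w x ≤ Real.exp D := fun x => by
      have := integral_mono (hIntg x) (integrable_const (Real.exp D)) fun e =>
        (le_abs_self _).trans (hexpb _)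
      simpa using this
    have hwp : ∀ x, 0 < w x := fun x => (Real.exp_pos _).trans_le (hwl x)
    have hlb : ∀ x, |Real.log (w x)| ≤ D := fun x => by
      rw [abs_le]
      constructor
      · rw [Real.le_log_iff_exp_le (hwp x)]; exact hwl x
      · rw [Real.log_le_iff_le_exp (hwp x)]; exact hwu x
    have hlm : Measurable fun x => Real.log (w x) := Real.measurable_log.comp hwm
    have hih := ih (fun x => Real.log (w x)) hlm D hlb
    simp only [Real.exp_log (hwp _)] at hih
    rw [trajK_integral_succ ρ B σ hB t c _ hem _ hexpb, Finset.sum_range_succ,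
      trajK_integral_succ ρ A σ hA t c _ hg _ hD]
    have hAc : Measurable fun x => A t c x := (hA t).comp (by fun_prop : Measurable fun x => (c, x))
    have hBc : Measurable fun x => B t c x := (hB t).comp (by fun_prop : Measurable fun x => (c, x))
    have hdi : Integrable (fun x => ‖A t c x - B t c x‖ ^ 2 / (2 * σ t ^ 2))
        (trajK ρ A σ t c) := by
      refine aux_int_bdd _ (((hAc.sub hBc).norm.pow_const 2).div_const _)
        (M t ^ 2 / (2 * σ t ^ 2)) fun x => ?_
      rw [abs_of_nonneg (by positivity)]
      have := hM t x
      gcongr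
    have hstep : ∫ x, ∫ e, g (stp t x (A t c x + σ t • WithLp.toLp 2 e)) ∂(gam d)
        ∂(trajK ρ A σ t c) ≤ ∫ x, (‖A t c x - B t c x‖ ^ 2 / (2 * σ t ^ 2) + Real.log (w x))
        ∂(trajK ρ A σ t c) := by
      refine integral_mono ?_ (hdi.add (aux_int_bdd _ hlm D hlb)) fun x => ?_
      · have := (aux_int_bdd ((trajK ρ A σ t c).prod (gam d))
          (hg.comp (trajK_step_meas' σ hA t c)) D fun _ => hD _).integral_prod_left
        exact this
      · exact aux_onestep (fun y => g (stp t x y))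
          (hg.comp (stp_measurable t measurable_const measurable_id)) D (fun _ => hD _) _ _ _ (hσ t)
    rw [integral_add hdi (aux_int_bdd _ hlm D hlb)] at hstep
    linarith

/-- Pinsker-type inequality. -/
lemma pinsker_aux {α : Type*} [MeasurableSpace α] (P Q : Measure α) [IsProbabilityMeasure P]
    [IsProbabilityMeasure Q] (f : α → ℝ) (hf : Measurable f) (R : ℝ) (hR : 0 ≤ R)
    (hfR : ∀ x, f x ∈ Set.Icc (-R) R) (kl : ℝ) (hkl : 0 ≤ kl)
    (hDV : ∀ (g : α → ℝ) (_ : Measurable g) (D : ℝ) (_ : ∀ x, |g x| ≤ D),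
      ∫ x, g x ∂P ≤ kl + Real.log (∫ x, Real.exp (g x) ∂Q)) :
    ∫ x, f x ∂P - ∫ x, f x ∂Q ≤ 2 * R * Real.sqrt (kl / 2) := by
  have hfa : ∀ x, |f x| ≤ R := fun x => abs_le.2 (hfR x)
  have hsub := hasSubgaussianMGF_of_mem_Icc (μ := Q) hf.aemeasurable
    (Filter.Eventually.of_forall hfR)
  set q := ∫ x, f x ∂Q with hq
  set p := ∫ x, f x ∂P with hp
  have hlam : ∀ l : ℝ, 0 < l → l * (p - q) ≤ kl + R ^ 2 * l ^ 2 / 2 := by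
    intro l hl
    have hqR : |q| ≤ R := by
      have := norm_integral_le_of_norm_le_const (μ := Q) (f := f) (C := R)
        (Filter.Eventually.of_forall hfa)
      simpa using this
    have h1 := hDV (fun x => l * (f x - q)) (by fun_prop) (l * (2 * R)) (fun x => by
      rw [abs_mul, abs_of_pos hl]
      gcongr
      calc |f x - q| ≤ |f x| + |q| := abs_sub _ _
        _ ≤ 2 * R := by linarith [hfa x])
    have h2 := hsub.mgf_le l
    have h3 : mgf (fun ω => f ω - q) Q l = ∫ x, Real.exp (l * (f x - q)) ∂Q := rfl
    rw [h3] at h2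
    have h4 : Real.log (∫ x, Real.exp (l * (f x - q)) ∂Q) ≤ R ^ 2 * l ^ 2 / 2 := by
      have hpos : 0 < ∫ x, Real.exp (l * (f x - q)) ∂Q := by
        refine integral_exp_pos ?_
        exact hsub.integrable_exp_mul l
      rw [Real.log_le_iff_le_exp hpos]
      refine h2.trans (le_of_eq ?_)
      congr 1
      push_cast
      rw [Real.norm_eq_abs, div_pow, sq_abs]
      ring
    have h5 : ∫ x, l * (f x - q) ∂P = l * (p - q) := by
      rw [integral_const_mul, integral_sub (aux_int_bdd _ hf R hfa) (integrable_const _)]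
      simp [hp]
    linarith
  -- optimise
  rcases eq_or_lt_of_le hR with hR0 | hRpos
  · have : f = fun _ => 0 := by
      funext x
      have := hfR x
      rw [← hR0] at this
      exact le_antisymm this.2 (by simpa using this.1)
    rw [hp, hq, this, ← hR0]; simp
  by_contra hcon
  push Not at hcon
  set r := Real.sqrt (kl / 2) with hr
  have hr0 : 0 ≤ r := Real.sqrt_nonneg _
  have hrr : r ^ 2 = kl / 2 := Real.sq_sqrt (by positivity)
  have hD : 0 < p - q := lt_of_le_of_lt (by positivity) hcon
  have h := hlam ((p - q) / R ^ 2) (by positivity)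
  have h2 : (p - q) ^ 2 ≤ 2 * R ^ 2 * kl := by
    have e1 : (p - q) / R ^ 2 * (p - q) = (p - q) ^ 2 / R ^ 2 := by ring
    have e2 : R ^ 2 * ((p - q) / R ^ 2) ^ 2 / 2 = (p - q) ^ 2 / R ^ 2 / 2 := by field_simp
    rw [e1, e2] at h
    have : (p - q) ^ 2 / R ^ 2 ≤ 2 * kl := by linarith
    rw [div_le_iff₀ (by positivity)] at this
    linarith
  have h3 : (2 * R * r) ^ 2 < (p - q) ^ 2 := by
    gcongr
  rw [mul_pow, hrr] at h3
  nlinarith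

lemma trajK_law
    (hA : ∀ t, Measurable fun p : C × (ℕ → EuclideanSpace ℝ (Fin d)) => A t p.1 p.2)
    {Ω : Type*} [MeasurableSpace Ω] (μ : Measure Ω) [IsProbabilityMeasure μ]
    (c : Ω → C) (hc : Measurable c) (T : ℕ)
    (hist : ℕ → Ω → ℕ → EuclideanSpace ℝ (Fin d)) (hh : ∀ t, Measurable (hist t))
    (θ0 : Ω → EuclideanSpace ℝ (Fin d)) (hθ : Measurable θ0) (hρ : μ.map θ0 = ρ)
    (h0 : ∀ ω, hist 0 ω = fun _ => θ0 ω) (hind0 : IndepFun c θ0 μ)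
    (e : ℕ → Ω → Fin d → ℝ) (he : ∀ t < T, Measurable (e t))
    (hel : ∀ t < T, μ.map (e t) = gam d)
    (hind : ∀ t < T, IndepFun (fun ω => (c ω, hist t ω)) (e t) μ)
    (hrec : ∀ t < T, ∀ ω, hist (t + 1) ω =
      stp t (hist t ω) (A t (c ω) (hist t ω) + σ t • WithLp.toLp 2 (e t ω)))
    (t : ℕ) (ht : t ≤ T) :
    μ.map (fun ω => (c ω, hist t ω)) = (μ.map c) ⊗ₘ (trajK ρ A σ t) := by
  have hPc : IsProbabilityMeasure (μ.map c) := Measure.isProbabilityMeasure_map hc.aemeasurable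
  induction t with
  | zero =>
    have : IsProbabilityMeasure (ρ.map (fun x (_ : ℕ) => x)) :=
      Measure.isProbabilityMeasure_map (by fun_prop)
    rw [trajK, Measure.compProd_const]
    have h1 := (indepFun_iff_map_prod_eq_prod_map_map hc.aemeasurable
      (by fun_prop : AEMeasurable (fun ω (_ : ℕ) => θ0 ω) μ)).1
      (hind0.comp measurable_id (by fun_prop : Measurable
        fun (x : EuclideanSpace ℝ (Fin d)) (_ : ℕ) => x))
    have h2 : hist 0 = fun ω _ => θ0 ω := funext h0
    rw [h2, h1, ← hρ, Measure.map_map (by fun_prop) hθ]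
    rfl
  | succ t ih =>
    have ih := ih (by omega)
    have hlt : t < T := by omega
    have hK := trajK_markov ρ A σ hA t
    have hK1 := trajK_markov ρ A σ hA (t + 1)
    have hjoint := (indepFun_iff_map_prod_eq_prod_map_map
      (hc.prodMk (hh t)).aemeasurable (he t hlt).aemeasurable).1 (hind t hlt)
    rw [ih, hel t hlt] at hjoint
    refine Measure.ext_of_lintegral _ fun f hf => ?_
    have hst := trajK_step_meas σ hA t
    have hF : Measurable fun p : (C × (ℕ → EuclideanSpace ℝ (Fin d))) × (Fin d → ℝ) =>
        f (p.1.1, stp t p.1.2 (A t p.1.1 p.1.2 + σ t • WithLp.toLp 2 p.2)) :=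
      hf.comp ((by fun_prop : Measurable fun p : (C × (ℕ → EuclideanSpace ℝ (Fin d))) ×
        (Fin d → ℝ) => p.1.1).prodMk (hst.comp (by fun_prop : Measurable fun p :
          (C × (ℕ → EuclideanSpace ℝ (Fin d))) × (Fin d → ℝ) => (p.1.1, (p.1.2, p.2)))))
    rw [lintegral_map hf (hc.prodMk (hh _)), Measure.lintegral_compProd hf]
    have e1 : ∫⁻ ω, f (c ω, hist (t + 1) ω) ∂μ =
        ∫⁻ p, f (p.1.1, stp t p.1.2 (A t p.1.1 p.1.2 + σ t • WithLp.toLp 2 p.2))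
          ∂(μ.map fun ω => ((c ω, hist t ω), e t ω)) := by
      rw [lintegral_map hF ((hc.prodMk (hh t)).prodMk (he t hlt))]
      refine lintegral_congr fun ω => ?_
      rw [hrec t hlt]
    rw [e1, hjoint, lintegral_prod _ hF.aemeasurable, Measure.lintegral_compProd hF.lintegral_prod_right']
    refine lintegral_congr fun x => ?_
    rw [trajK_succ_apply ρ A σ hA, lintegral_map (f := fun y => f (x, y)) (hf.comp measurable_prodMk_left)
      (trajK_step_meas' σ hA t x), lintegral_prod]
    exact ((hf.comp (by fun_prop : Measurable fun y => (x, y))).comp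
      (trajK_step_meas' σ hA t x)).aemeasurable

end traj

lemma trajK_congr {C : Type*} [MeasurableSpace C] {d : ℕ}
    (ρ : Measure (EuclideanSpace ℝ (Fin d))) [IsProbabilityMeasure ρ]
    (A : ℕ → C → (ℕ → EuclideanSpace ℝ (Fin d)) → EuclideanSpace ℝ (Fin d)) (σ : ℕ → ℝ)
    (hA : ∀ t, Measurable fun p : C × (ℕ → EuclideanSpace ℝ (Fin d)) => A t p.1 p.2)
    (c c' : C) (h : ∀ t x, A t c x = A t c' x) (t : ℕ) :
    trajK ρ A σ t c = trajK ρ A σ t c' := by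
  induction t with
  | zero => simp [trajK]
  | succ t ih =>
    rw [trajK_succ_apply ρ A σ hA, trajK_succ_apply ρ A σ hA, ih]
    simp_rw [h]

lemma indep_swap {Ω X Y Z : Type*} [MeasurableSpace Ω] [MeasurableSpace X] [MeasurableSpace Y]
    [MeasurableSpace Z] (μ : Measure Ω) [IsProbabilityMeasure μ] {f : Ω → X} {g : Ω → Y}
    {h : Ω → Z} (hf : Measurable f) (hg : Measurable g) (hh : Measurable h)
    (h1 : IndepFun f g μ) (h2 : IndepFun (fun ω => (f ω, g ω)) h μ) :
    IndepFun (fun ω => (f ω, h ω)) g μ := by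
  have h3 : IndepFun f h μ := h2.comp measurable_fst measurable_id
  rw [indepFun_iff_map_prod_eq_prod_map_map (hf.prodMk hh).aemeasurable hg.aemeasurable,
    (indepFun_iff_map_prod_eq_prod_map_map hf.aemeasurable hh.aemeasurable).1 h3]
  have e1 := (indepFun_iff_map_prod_eq_prod_map_map hf.aemeasurable hg.aemeasurable).1 h1
  have e2 := (indepFun_iff_map_prod_eq_prod_map_map (hf.prodMk hg).aemeasurable hh.aemeasurable).1 h2
  rw [e1] at e2
  have := Measure.isProbabilityMeasure_map (μ := μ) hf.aemeasurable
  have := Measure.isProbabilityMeasure_map (μ := μ) hg.aemeasurable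
  have := Measure.isProbabilityMeasure_map (μ := μ) hh.aemeasurable
  have e3 : μ.map (fun ω => ((f ω, h ω), g ω)) =
      (μ.map (fun ω => ((f ω, g ω), h ω))).map (fun p => ((p.1.1, p.2), p.1.2)) := by
    rw [Measure.map_map (by fun_prop) (by fun_prop)]; rfl
  rw [e3, e2]
  refine Measure.ext_of_lintegral _ fun F hF => ?_
  rw [lintegral_map hF (by fun_prop), lintegral_prod _ (by fun_prop), lintegral_prod _ (by fun_prop),
    lintegral_prod _ (by fun_prop), lintegral_prod _ (by fun_prop)]
  refine lintegral_congr fun x => ?_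
  rw [lintegral_lintegral_swap (by fun_prop)]

/-- keep the noise of times `< t` -/
noncomputable def maskN {T d : ℕ} (t : ℕ) (e : Fin T × Fin d → ℝ) : Fin T × Fin d → ℝ :=
  fun p => if p.1.val < t then e p else 0

lemma maskN_meas {T d : ℕ} (t : ℕ) : Measurable (maskN (T := T) (d := d) t) := by
  refine measurable_pi_lambda _ fun p => ?_
  unfold maskN
  by_cases h : p.1.val < t
  · simp only [h, if_true]; fun_prop
  · simp only [h, if_false]; fun_prop

lemma noise_split {T d : ℕ} {Ω : Type*} [MeasurableSpace Ω] (μ : Measure Ω) [IsProbabilityMeasure μ]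
    (E : Ω → Fin T × Fin d → ℝ) (hE : Measurable E)
    (hl : μ.map E = Measure.pi fun _ : Fin T × Fin d => gaussianReal 0 1) (t : Fin T) :
    IndepFun (fun ω => maskN t.val (E ω)) (fun ω => fun i => E ω (t, i)) μ ∧
      μ.map (fun ω => fun i => E ω (t, i)) = gam d := by
  have hEi : ∀ p, μ.map (fun ω => E ω p) = gaussianReal 0 1 := fun p => by
    have : (fun ω => E ω p) = (fun x : Fin T × Fin d → ℝ => x p) ∘ E := rfl
    rw [this, ← Measure.map_map (by fun_prop) hE, hl]
    exact (measurePreserving_eval (fun _ : Fin T × Fin d => gaussianReal 0 1) p).map_eq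
  have hii : iIndepFun (fun p ω => E ω p) μ := by
    rw [iIndepFun_iff_map_fun_eq_pi_map (fun p => by fun_prop)]
    simp_rw [hEi]
    exact hl
  constructor
  · have h := hii.indepFun_finset (Finset.univ.filter fun p => p.1.val < t.val)
      (Finset.univ.filter fun p => p.1 = t) (by
        rw [Finset.disjoint_left]
        intro p hp hq
        simp only [Finset.mem_filter, Finset.mem_univ, true_and] at hp hq
        rw [hq] at hp
        exact lt_irrefl _ hp) (fun p => by fun_prop)
    have := h.comp
      (φ := fun (y : ↥(Finset.univ.filter fun p : Fin T × Fin d => p.1.val < t.val) → ℝ) =>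
        fun p : Fin T × Fin d => if hp : p.1.val < t.val then
          y ⟨p, Finset.mem_filter.2 ⟨Finset.mem_univ _, hp⟩⟩ else 0)
      (ψ := fun (y : ↥(Finset.univ.filter fun p : Fin T × Fin d => p.1 = t) → ℝ) =>
        fun i : Fin d => y ⟨(t, i), Finset.mem_filter.2 ⟨Finset.mem_univ _, rfl⟩⟩)
      (by
        refine measurable_pi_lambda _ fun p => ?_
        by_cases hp : p.1.val < t.val
        · simp only [hp, dite_true]; fun_prop
        · simp only [hp, dite_false]; fun_prop)
      (by fun_prop)
    convert this using 1
    · funext ω p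
      simp [maskN]
    · rfl
  · have h2 : iIndepFun (fun (i : Fin d) ω => E ω (t, i)) μ :=
      hii.precomp (g := fun i : Fin d => (t, i)) (fun i j hij => by simpa using hij)
    rw [iIndepFun_iff_map_fun_eq_pi_map (fun p => by fun_prop)] at h2
    rw [h2]
    simp_rw [hEi]

lemma hist_ex {C Ω : Type*} [MeasurableSpace C] {d T : ℕ}
    (A : ℕ → C → (ℕ → EuclideanSpace ℝ (Fin d)) → EuclideanSpace ℝ (Fin d)) (σ : ℕ → ℝ)
    (hA : ∀ t, Measurable fun p : C × (ℕ → EuclideanSpace ℝ (Fin d)) => A t p.1 p.2)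
    (c : Ω → C)
    (hist : ℕ → Ω → ℕ → EuclideanSpace ℝ (Fin d))
    (θ0 : Ω → EuclideanSpace ℝ (Fin d))
    (h0 : ∀ ω, hist 0 ω = fun _ => θ0 ω)
    (E : Ω → Fin T × Fin d → ℝ)
    (hrec : ∀ (t : ℕ) (ht : t < T), ∀ ω, hist (t + 1) ω =
      stp t (hist t ω) (A t (c ω) (hist t ω) + σ t • WithLp.toLp 2 (fun i => E ω (⟨t, ht⟩, i))))
    (t : ℕ) (ht : t ≤ T) :
    ∃ Φ : (C × EuclideanSpace ℝ (Fin d)) × (Fin T × Fin d → ℝ) → ℕ → EuclideanSpace ℝ (Fin d),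
      Measurable Φ ∧ ∀ ω, hist t ω = Φ ((c ω, θ0 ω), maskN t (E ω)) := by
  induction t with
  | zero => exact ⟨fun p _ => p.1.2, by fun_prop, fun ω => by rw [h0]⟩
  | succ t ih =>
    obtain ⟨Φ, hΦ, hh⟩ := ih (by omega)
    have hm := maskN_meas (T := T) (d := d) t
    have hΦ' : Measurable fun p : (C × EuclideanSpace ℝ (Fin d)) × (Fin T × Fin d → ℝ) =>
        Φ (p.1, maskN t p.2) := hΦ.comp (by fun_prop)
    refine ⟨fun p => stp t (Φ (p.1, maskN t p.2)) (A t p.1.1 (Φ (p.1, maskN t p.2)) +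
      σ t • WithLp.toLp 2 (fun i => p.2 (⟨t, ht⟩, i))), ?_, fun ω => ?_⟩
    · refine stp_measurable t hΦ' (Measurable.add ?_ (by fun_prop))
      exact (hA t).comp ((by fun_prop : Measurable fun p : (C × EuclideanSpace ℝ (Fin d)) ×
        (Fin T × Fin d → ℝ) => p.1.1).prodMk hΦ')
    · have e1 : maskN t (maskN (t + 1) (E ω)) = maskN t (E ω) := by
        funext p
        unfold maskN
        by_cases h : p.1.val < t
        · simp [h, Nat.lt_succ_of_lt h]
        · simp [h]
      simp only [e1, ← hh]
      rw [hrec t ht]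
      simp [maskN]

lemma pi_update_lint {ι X : Type*} [Fintype ι] [DecidableEq ι] [MeasurableSpace X] (P : Measure X)
    [IsProbabilityMeasure P] (g : ι) :
    ((Measure.pi fun _ : ι => P).prod P).map (fun p => Function.update p.1 g p.2) =
      Measure.pi fun _ : ι => P := by
  symm
  refine Measure.pi_eq fun s hs => ?_
  have hmeas : Measurable fun p : (ι → X) × X => Function.update p.1 g p.2 := by
    refine measurable_pi_lambda _ fun i => ?_
    by_cases h : i = g
    · subst h; simp; fun_prop
    · simp only [Function.update_of_ne h]; fun_prop
  rw [Measure.map_apply hmeas (MeasurableSet.univ_pi hs)]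
  have : (fun p : (ι → X) × X => Function.update p.1 g p.2) ⁻¹' (Set.univ.pi s) =
      (Set.univ.pi (Function.update s g Set.univ)) ×ˢ (s g) := by
    ext p
    simp only [Set.mem_preimage, Set.mem_pi, Set.mem_univ, forall_const, Set.mem_prod]
    constructor
    · intro h
      refine ⟨fun i => ?_, by simpa using h g⟩
      by_cases hi : i = g
      · subst hi; simp
      · have := h i
        rw [Function.update_of_ne hi] at this ⊢
        exact this
    · rintro ⟨h, h'⟩ i
      by_cases hi : i = g
      · subst hi; simpa using h'
      · have := h i
        rw [Function.update_of_ne hi] at this ⊢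
        exact this
  rw [this, Measure.prod_prod, Measure.pi_pi, ← Finset.prod_erase_mul _ _ (Finset.mem_univ g),
    ← Finset.prod_erase_mul Finset.univ (fun i => P (s i)) (Finset.mem_univ g)]
  simp only [Function.update_self, measure_univ, mul_one]
  congr 1
  refine Finset.prod_congr rfl fun i hi => ?_
  rw [Function.update_of_ne (Finset.ne_of_mem_erase hi)]

/-- conditioning data `(((J, U), S̃), V)` -/
abbrev CT (N T : ℕ) (𝒵 : Type*) :=
  ((Fin N × (Fin N → Bool)) × (Fin (2 * N) → 𝒵)) × (Fin T → Finset (Fin N))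

/-- flip the bit `U_J` -/
def flipU {N : ℕ} (q : Fin N × (Fin N → Bool)) : Fin N × (Fin N → Bool) :=
  (q.1, Function.update q.2 q.1 (!q.2 q.1))

/-- flip the bit `U_J` -/
def flipC {N T : ℕ} {𝒵 : Type*} (c : CT N T 𝒵) : CT N T 𝒵 := ((flipU c.1.1, c.1.2), c.2)

/-- resample the ghost -/
noncomputable def ghostC {N T : ℕ} {𝒵 : Type*} (c : CT N T 𝒵) (z : 𝒵) : CT N T 𝒵 :=
  ((c.1.1, Function.update c.1.2 (subIdx N c.1.1.1 (!c.1.1.2 c.1.1.1)) z), c.2)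

lemma subIdx_inj {N : ℕ} {i j : Fin N} {u v : Bool} (h : subIdx N i u = subIdx N j v) :
    i = j ∧ u = v := by
  have hi := i.isLt
  have hj := j.isLt
  simp only [subIdx, Fin.mk.injEq] at h
  cases u <;> cases v <;> simp_all <;> first | (apply Fin.ext; omega) | omega

lemma finset_discrete (N : ℕ) : DiscreteMeasurableSpace (Finset (Fin N)) := ⟨fun _ => trivial⟩

lemma smp_meas {α 𝒵 : Type*} [MeasurableSpace α] [MeasurableSpace 𝒵] {N : ℕ}
    {u : α → Bool} {s : α → Fin (2 * N) → 𝒵} (hu : Measurable u) (hs : Measurable s) (i : Fin N) :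
    Measurable fun a => s a (subIdx N i (u a)) := by
  have : (fun a => s a (subIdx N i (u a))) =
      fun a => if u a = true then s a (subIdx N i true) else s a (subIdx N i false) := by
    funext a; cases h : u a <;> simp
  rw [this]
  exact Measurable.ite (hu (measurableSet_singleton true)) (by fun_prop) (by fun_prop)

lemma smpJ_meas {α 𝒵 : Type*} [MeasurableSpace α] [MeasurableSpace 𝒵] {N : ℕ}
    {j : α → Fin N} {u : α → Bool} {s : α → Fin (2 * N) → 𝒵} (hj : Measurable j)
    (hu : Measurable u) (hs : Measurable s) :
    Measurable fun a => s a (subIdx N (j a) (u a)) := by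
  have h : Measurable fun p : Fin N × α => s p.2 (subIdx N p.1 (u p.2)) :=
    measurable_from_prod_countable_right fun i => smp_meas hu hs i
  exact h.comp (hj.prodMk measurable_id)

lemma sumV_meas {α : Type*} [MeasurableSpace α] {N d : ℕ} {v : α → Finset (Fin N)}
    (hv : Measurable v) {F : Fin N → α → EuclideanSpace ℝ (Fin d)} (hF : ∀ i, Measurable (F i)) :
    Measurable fun a => ∑ i ∈ v a, F i a := by
  have : (fun a => ∑ i ∈ v a, F i a) = fun a => ∑ i, if i ∈ v a then F i a else 0 := by
    funext a; simp
  rw [this]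
  refine Finset.measurable_sum _ fun i _ => Measurable.ite ?_ (hF i) measurable_const
  exact hv (t := {w | i ∈ w}) trivial

lemma evalU_meas {N : ℕ} : Measurable fun q : Fin N × (Fin N → Bool) => q.2 q.1 :=
  measurable_of_countable _

/-- true drift -/
noncomputable def drA {N T d : ℕ} {𝒵 : Type*}
    (G : EuclideanSpace ℝ (Fin d) → 𝒵 → EuclideanSpace ℝ (Fin d)) (η : Fin T → ℝ) (K : ℕ)
    (t : ℕ) (c : CT N T 𝒵) (x : ℕ → EuclideanSpace ℝ (Fin d)) : EuclideanSpace ℝ (Fin d) :=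
  if h : t < T then
    x t - (η ⟨t, h⟩ / (K : ℝ)) • (∑ i ∈ c.2 ⟨t, h⟩, G (x t) (c.1.2 (subIdx N i (c.1.1.2 i))))
  else 0

/-- prior drift -/
noncomputable def drB {N T d : ℕ} {𝒵 : Type*}
    (G : EuclideanSpace ℝ (Fin d) → 𝒵 → EuclideanSpace ℝ (Fin d)) (η : Fin T → ℝ) (K : ℕ)
    (P : Fin T → CT N T 𝒵 → (ℕ → EuclideanSpace ℝ (Fin d)) → ℝ)
    (t : ℕ) (c : CT N T 𝒵) (x : ℕ → EuclideanSpace ℝ (Fin d)) : EuclideanSpace ℝ (Fin d) :=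
  if h : t < T then
    x t - (η ⟨t, h⟩ / (K : ℝ)) • (∑ i ∈ c.2 ⟨t, h⟩,
      if i = c.1.1.1 then
        (1 - P ⟨t, h⟩ c x) • G (x t) (c.1.2 (subIdx N i false)) +
          P ⟨t, h⟩ c x • G (x t) (c.1.2 (subIdx N i true))
      else G (x t) (c.1.2 (subIdx N i (c.1.1.2 i))))
  else 0

section core
variable {N T d : ℕ} {𝒵 : Type*} [MeasurableSpace 𝒵]
    {G : EuclideanSpace ℝ (Fin d) → 𝒵 → EuclideanSpace ℝ (Fin d)} {η : Fin T → ℝ} {K : ℕ}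
    {P : Fin T → CT N T 𝒵 → (ℕ → EuclideanSpace ℝ (Fin d)) → ℝ}

lemma drA_meas (hG : Measurable fun p : EuclideanSpace ℝ (Fin d) × 𝒵 => G p.1 p.2) (t : ℕ) :
    Measurable fun p : CT N T 𝒵 × (ℕ → EuclideanSpace ℝ (Fin d)) => drA G η K t p.1 p.2 := by
  unfold drA
  by_cases h : t < T
  · simp only [h, dite_true]
    refine Measurable.sub (by fun_prop) (Measurable.fun_const_smul ?_ _)
    refine sumV_meas (by fun_prop) fun i => ?_
    exact hG.comp ((by fun_prop : Measurable fun p : CT N T 𝒵 × (ℕ → EuclideanSpace ℝ (Fin d)) =>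
      p.2 t).prodMk (smp_meas (by fun_prop) (by fun_prop) i))
  · simp only [h, dite_false]; fun_prop

lemma drB_meas (hG : Measurable fun p : EuclideanSpace ℝ (Fin d) × 𝒵 => G p.1 p.2)
    (hP : ∀ t, Measurable fun p : CT N T 𝒵 × (ℕ → EuclideanSpace ℝ (Fin d)) => P t p.1 p.2)
    (t : ℕ) :
    Measurable fun p : CT N T 𝒵 × (ℕ → EuclideanSpace ℝ (Fin d)) => drB G η K P t p.1 p.2 := by
  unfold drB
  by_cases h : t < T
  · simp only [h, dite_true]
    refine Measurable.sub (by fun_prop) (Measurable.fun_const_smul ?_ _)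
    refine sumV_meas (by fun_prop) fun i => ?_
    have hx : Measurable fun p : CT N T 𝒵 × (ℕ → EuclideanSpace ℝ (Fin d)) => p.2 t := by fun_prop
    have hs : ∀ k, Measurable fun p : CT N T 𝒵 × (ℕ → EuclideanSpace ℝ (Fin d)) => p.1.1.2 k := by
      intro k; fun_prop
    refine Measurable.ite ?_ ?_ ?_
    · have : Measurable fun p : CT N T 𝒵 × (ℕ → EuclideanSpace ℝ (Fin d)) => p.1.1.1.1 := by
        fun_prop
      exact this (measurableSet_eq_fun (measurable_const (a := i)) measurable_id)
    · exact ((measurable_const.sub (hP _)).smul (hG.comp (hx.prodMk (hs _)))).add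
        ((hP _).smul (hG.comp (hx.prodMk (hs _))))
    · exact hG.comp (hx.prodMk (smp_meas (by fun_prop) (by fun_prop) i))
  · simp only [h, dite_false]; fun_prop

lemma drB_flip (hPf : ∀ t c x, P t (flipC c) x = P t c x) (t : ℕ) (c : CT N T 𝒵)
    (x : ℕ → EuclideanSpace ℝ (Fin d)) :
    drB G η K P t (flipC c) x = drB G η K P t c x := by
  unfold drB
  simp only [hPf]
  by_cases h : t < T
  · simp only [h, dite_true]
    congr 2
    refine Finset.sum_congr rfl fun i _ => ?_
    simp only [flipC, flipU]
    by_cases hi : i = c.1.1.1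
    · simp [hi]
    · simp [hi]
  · simp only [h, dite_false]

lemma drA_ghost (t : ℕ) (c : CT N T 𝒵) (z : 𝒵)
    (x : ℕ → EuclideanSpace ℝ (Fin d)) :
    drA G η K t (ghostC c z) x = drA G η K t c x := by
  unfold drA
  by_cases h : t < T
  · simp only [h, dite_true]
    congr 2
    refine Finset.sum_congr rfl fun i _ => ?_
    simp only [ghostC]
    rw [Function.update_of_ne]
    intro h
    obtain ⟨h1, h2⟩ := subIdx_inj h
    rw [h1] at h2
    simp at h2
  · simp only [h, dite_false]

lemma dr_diff (L : ℝ) (hL : ∀ θ z, ‖G θ z‖ ≤ L) (hη : ∀ t, 0 < η t)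
    (t : Fin T) (c : CT N T 𝒵)
    (x : ℕ → EuclideanSpace ℝ (Fin d)) :
    ‖drA G η K t c x - drB G η K P t c x‖ ≤
      if c.1.1.1 ∈ c.2 t then
        η t / K * (2 * L) * |(if c.1.1.2 c.1.1.1 then (1 : ℝ) else 0) - P t c x| else 0 := by
  unfold drA drB
  simp only [t.isLt, dite_true, Fin.eta]
  have e : ∀ a b c : EuclideanSpace ℝ (Fin d), c - a - (c - b) = b - a := fun a b c => by abel
  rw [e, ← smul_sub, ← Finset.sum_sub_distrib]
  have h0 : ∀ i ∈ c.2 t, i ≠ c.1.1.1 → ((if i = c.1.1.1 then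
        (1 - P t c x) • G (x t) (c.1.2 (subIdx N i false)) +
          P t c x • G (x t) (c.1.2 (subIdx N i true))
      else G (x t) (c.1.2 (subIdx N i (c.1.1.2 i)))) -
        G (x t) (c.1.2 (subIdx N i (c.1.1.2 i)))) = 0 := by
    intro i _ hi
    simp [hi]
  by_cases hj : c.1.1.1 ∈ c.2 t
  · rw [Finset.sum_eq_single_of_mem _ hj h0]
    simp only [hj, if_true]
    have hηK : 0 ≤ η t / (K : ℝ) := div_nonneg (hη t).le (by positivity)
    rw [norm_smul, Real.norm_eq_abs, abs_of_nonneg hηK, mul_assoc]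
    refine mul_le_mul_of_nonneg_left ?_ hηK
    set g0 := G (x t) (c.1.2 (subIdx N c.1.1.1 false))
    set g1 := G (x t) (c.1.2 (subIdx N c.1.1.1 true))
    have hg : ‖g1 - g0‖ ≤ 2 * L := by
      have := norm_sub_le g1 g0
      linarith [hL (x t) (c.1.2 (subIdx N c.1.1.1 false)), hL (x t) (c.1.2 (subIdx N c.1.1.1 true))]
    have : (1 - P t c x) • g0 + P t c x • g1 -
        G (x t) (c.1.2 (subIdx N c.1.1.1 (c.1.1.2 c.1.1.1))) =
        (P t c x - (if c.1.1.2 c.1.1.1 then (1 : ℝ) else 0)) • (g1 - g0) := by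
      cases hu : c.1.1.2 c.1.1.1
      · simp only [Bool.false_eq_true, if_false]
        module
      · simp only [if_true]
        module
    rw [this, norm_smul, Real.norm_eq_abs, abs_sub_comm, mul_comm]
    exact mul_le_mul_of_nonneg_right hg (abs_nonneg _)
  · simp only [hj, if_false]
    rw [Finset.sum_eq_zero (fun i hi => h0 i hi (fun h => hj (h ▸ hi)))]
    simp

end core

lemma bern_not : bern.map (fun b => !b) = bern := by
  refine Measure.ext_of_singleton fun b => ?_
  rw [Measure.map_apply (measurable_of_countable _) (measurableSet_singleton b)]
  have : (fun b => !b) ⁻¹' {b} = {!b} := by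
    ext x; cases x <;> cases b <;> simp
  rw [this]
  unfold bern
  rw [PMF.toMeasure_apply_singleton _ _ (measurableSet_singleton _),
    PMF.toMeasure_apply_singleton _ _ (measurableSet_singleton _)]
  cases b <;> simp [PMF.bernoulli_apply]

instance bern_prob : IsProbabilityMeasure bern := by unfold bern; infer_instance

lemma flipU_mp {N : ℕ} (mJ : Measure (Fin N)) [IsProbabilityMeasure mJ] :
    MeasurePreserving flipU (mJ.prod (Measure.pi fun _ : Fin N => bern))
      (mJ.prod (Measure.pi fun _ : Fin N => bern)) := by
  refine MeasurePreserving.skew_product (g := fun j u => Function.update u j (!u j))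
    (MeasurePreserving.id mJ) (measurable_of_countable _) (Filter.Eventually.of_forall fun j => ?_)
  have h := measurePreserving_pi (fun _ : Fin N => bern) (fun _ : Fin N => bern)
    (f := fun i => if i = j then (fun b => !b) else id) (fun i => by
      by_cases hi : i = j
      · simp only [hi, if_true]; exact ⟨measurable_of_countable _, bern_not⟩
      · simp only [hi, if_false]; exact MeasurePreserving.id _)
  convert h.map_eq using 2
  funext u i
  by_cases hi : i = j
  · subst hi; simp
  · simp [hi]

lemma flipC_mp {N T : ℕ} {𝒵 : Type*} [MeasurableSpace 𝒵] (mJ : Measure (Fin N))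
    [IsProbabilityMeasure mJ] (mS : Measure (Fin (2 * N) → 𝒵)) [IsProbabilityMeasure mS]
    (mV : Measure (Fin T → Finset (Fin N))) [IsProbabilityMeasure mV] :
    MeasurePreserving flipC (((mJ.prod (Measure.pi fun _ : Fin N => bern)).prod mS).prod mV)
      (((mJ.prod (Measure.pi fun _ : Fin N => bern)).prod mS).prod mV) :=
  ((flipU_mp mJ).prod (MeasurePreserving.id mS)).prod (MeasurePreserving.id mV)

lemma ghostC_meas {N T : ℕ} {𝒵 : Type*} [MeasurableSpace 𝒵] :
    Measurable fun p : CT N T 𝒵 × 𝒵 => ghostC p.1 p.2 := by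
  have h : Measurable fun p : ((Fin N × (Fin N → Bool)) × (Fin (2 * N) → 𝒵)) × 𝒵 =>
      Function.update p.1.2 (subIdx N p.1.1.1 (!p.1.1.2 p.1.1.1)) p.2 := by
    have h' : Measurable fun p : (Fin N × (Fin N → Bool)) × ((Fin (2 * N) → 𝒵) × 𝒵) =>
      Function.update p.2.1 (subIdx N p.1.1 (!p.1.2 p.1.1)) p.2.2 :=
      measurable_from_prod_countable_right fun q => by
        refine measurable_pi_lambda _ fun i => ?_
        simp only
        by_cases hi : i = subIdx N q.1 (!q.2 q.1)
        · rw [hi]; simp only [Function.update_self]; fun_prop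
        · simp only [Function.update_of_ne hi]; fun_prop
    exact h'.comp (by fun_prop : Measurable fun p : ((Fin N × (Fin N → Bool)) ×
      (Fin (2 * N) → 𝒵)) × 𝒵 => (p.1.1, (p.1.2, p.2)))
  unfold ghostC
  refine Measurable.prodMk (Measurable.prodMk (by fun_prop) ?_) (by fun_prop)
  exact h.comp (by fun_prop : Measurable fun p : CT N T 𝒵 × 𝒵 => (p.1.1, p.2))

lemma ghostC_mp {N T : ℕ} {𝒵 : Type*} [MeasurableSpace 𝒵] (m1 : Measure (Fin N × (Fin N → Bool)))
    [IsProbabilityMeasure m1] (PZ : Measure 𝒵) [IsProbabilityMeasure PZ]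
    (mV : Measure (Fin T → Finset (Fin N))) [IsProbabilityMeasure mV] :
    (((m1.prod (Measure.pi fun _ : Fin (2 * N) => PZ)).prod mV).prod PZ).map
      (fun p => ghostC p.1 p.2) = (m1.prod (Measure.pi fun _ : Fin (2 * N) => PZ)).prod mV := by
  refine Measure.ext_of_lintegral _ fun f hf => ?_
  have hg := ghostC_meas (N := N) (T := T) (𝒵 := 𝒵)
  have hfg : Measurable fun p : CT N T 𝒵 × 𝒵 => f (ghostC p.1 p.2) := hf.comp hg
  rw [lintegral_map hf hg, lintegral_prod _ hfg.aemeasurable,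
    lintegral_prod _ hfg.lintegral_prod_right'.aemeasurable,
    lintegral_prod _ (by fun_prop), lintegral_prod _ hf.aemeasurable,
    lintegral_prod _ (by fun_prop)]
  refine lintegral_congr fun q => ?_
  simp only
  have hu := pi_update_lint (ι := Fin (2 * N)) PZ (subIdx N q.1 (!q.2 q.1))
  have hum : Measurable fun p : (Fin (2 * N) → 𝒵) × 𝒵 =>
      Function.update p.1 (subIdx N q.1 (!q.2 q.1)) p.2 := by
    refine measurable_pi_lambda _ fun i => ?_
    by_cases hi : i = subIdx N q.1 (!q.2 q.1)
    · rw [hi]; simp only [Function.update_self]; fun_prop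
    · simp only [Function.update_of_ne hi]; fun_prop
  have hH : Measurable fun s : Fin (2 * N) → 𝒵 => ∫⁻ v, f ((q, s), v) ∂mV := by
    fun_prop
  conv_rhs => rw [← hu]
  have hHu : Measurable fun a : (Fin (2 * N) → 𝒵) × 𝒵 => ∫⁻ v, f ((q,
      Function.update a.1 (subIdx N q.1 (!q.2 q.1)) a.2), v) ∂mV := hH.comp hum
  rw [lintegral_map hH hum, lintegral_prod _ hHu.aemeasurable]
  refine lintegral_congr fun s => ?_
  rw [lintegral_lintegral_swap]
  · rfl
  · exact (hfg.comp (by fun_prop : Measurable fun p : (Fin T → Finset (Fin N)) × 𝒵 =>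
      ((((q, s), p.1) : CT N T 𝒵), p.2))).aemeasurable
lemma unif_int {Ω X : Type*} [MeasurableSpace Ω] [MeasurableSpace X] (μ : Measure Ω)
    [IsProbabilityMeasure μ] {N : ℕ} (J : Ω → Fin N) (hJ : Measurable J)
    (hu : ∀ j : Fin N, μ (J ⁻¹' {j}) = 1 / N) (x : Ω → X) (hx : Measurable x)
    (hind : IndepFun x J μ) (F : Fin N → X → ℝ) (hF : ∀ i, Measurable (F i)) (C : ℝ)
    (hC : ∀ i y, |F i y| ≤ C) :
    ∫ ω, (1 / N : ℝ) * ∑ i, F i (x ω) ∂μ = ∫ ω, F (J ω) (x ω) ∂μ := by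
  have hFm : Measurable fun p : X × Fin N => F p.2 p.1 :=
    measurable_from_prod_countable_left fun i => hF i
  have := Measure.isProbabilityMeasure_map (μ := μ) hJ.aemeasurable
  have := Measure.isProbabilityMeasure_map (μ := μ) hx.aemeasurable
  have e1 : ∫ ω, F (J ω) (x ω) ∂μ = ∫ p, F p.2 p.1 ∂(μ.map fun ω => (x ω, J ω)) := by
    rw [integral_map (hx.prodMk hJ).aemeasurable hFm.aestronglyMeasurable]
  rw [e1, (indepFun_iff_map_prod_eq_prod_map_map hx.aemeasurable hJ.aemeasurable).1 hind,
    integral_prod _ (aux_int_bdd _ hFm C fun _ => hC _ _), ← integral_map (μ := μ) (φ := x)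
      (f := fun y => (1 / N : ℝ) * ∑ i, F i y) hx.aemeasurable
      (Measurable.aestronglyMeasurable (by fun_prop))]
  refine integral_congr_ae (Filter.Eventually.of_forall fun y => ?_)
  simp only
  rw [integral_fintype Integrable.of_finite, Finset.mul_sum]
  refine Finset.sum_congr rfl fun i _ => ?_
  rw [Measure.real, Measure.map_apply hJ (measurableSet_singleton i), hu]
  simp

lemma law_c {Ω X1 X2 X3 X4 : Type*} [MeasurableSpace Ω] [MeasurableSpace X1] [MeasurableSpace X2]
    [MeasurableSpace X3] [MeasurableSpace X4] (μ : Measure Ω)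
    [IsProbabilityMeasure μ] (St : Ω → X1) (U : Ω → X2) (V : Ω → X3) (J : Ω → X4)
    (hSt : Measurable St) (hU : Measurable U) (hV : Measurable V) (hJ : Measurable J)
    (mS : Measure X1) (mU : Measure X2) [IsProbabilityMeasure mS] [IsProbabilityMeasure mU]
    (hlaw : μ.map (fun ω => (St ω, U ω)) = mS.prod mU)
    (h1 : IndepFun (fun ω => (St ω, U ω)) V μ)
    (h2 : IndepFun (fun ω => ((St ω, U ω), V ω)) J μ) :
    μ.map (fun ω => (((J ω, U ω), St ω), V ω)) =
      (((μ.map J).prod mU).prod mS).prod (μ.map V) := by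
  have mSe : μ.map St = mS := by
    have : St = Prod.fst ∘ (fun ω => (St ω, U ω)) := rfl
    rw [this, ← Measure.map_map measurable_fst (by fun_prop), hlaw]
    simp
  have mUe : μ.map U = mU := by
    have : U = Prod.snd ∘ (fun ω => (St ω, U ω)) := rfl
    rw [this, ← Measure.map_map measurable_snd (by fun_prop), hlaw]
    simp
  have i1 : IndepFun St U μ := by
    rw [indepFun_iff_map_prod_eq_prod_map_map hSt.aemeasurable hU.aemeasurable, hlaw, mSe, mUe]
  have i2 : IndepFun (fun ω => ((St ω, U ω), J ω)) V μ :=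
    indep_swap μ (by fun_prop) hV hJ h1 h2
  have i3 : IndepFun (fun ω => (St ω, U ω)) J μ := h2.comp measurable_fst measurable_id
  have i4 : IndepFun (fun ω => (U ω, J ω)) St μ :=
    indep_swap μ hU hSt hJ i1.symm (i3.comp (φ := Prod.swap) measurable_swap measurable_id)
  have i5 : IndepFun (fun ω => (J ω, U ω)) St μ :=
    i4.comp (φ := Prod.swap) measurable_swap measurable_id
  have i6 : IndepFun J U μ := (i3.comp (φ := Prod.snd) measurable_snd measurable_id).symm
  have i7 : IndepFun (fun ω => ((J ω, U ω), St ω)) V μ :=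
    i2.comp (φ := fun p => ((p.2, p.1.2), p.1.1)) (by fun_prop) measurable_id
  rw [(indepFun_iff_map_prod_eq_prod_map_map (by fun_prop) hV.aemeasurable).1 i7,
    (indepFun_iff_map_prod_eq_prod_map_map (by fun_prop) hSt.aemeasurable).1 i5,
    (indepFun_iff_map_prod_eq_prod_map_map hJ.aemeasurable hU.aemeasurable).1 i6, mSe, mUe]

section core2
variable {N T d : ℕ} {𝒵 : Type*} [MeasurableSpace 𝒵]
    {G : EuclideanSpace ℝ (Fin d) → 𝒵 → EuclideanSpace ℝ (Fin d)} {η : Fin T → ℝ} {K : ℕ}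
    {P : Fin T → CT N T 𝒵 → (ℕ → EuclideanSpace ℝ (Fin d)) → ℝ}

/-- test function -/
def fC (loss : EuclideanSpace ℝ (Fin d) → 𝒵 → ℝ) (c : CT N T 𝒵)
    (x : ℕ → EuclideanSpace ℝ (Fin d)) : ℝ :=
  loss (x T) (c.1.2 (subIdx N c.1.1.1 (!c.1.1.2 c.1.1.1))) -
    loss (x T) (c.1.2 (subIdx N c.1.1.1 (c.1.1.2 c.1.1.1)))

/-- noise levels extended to all times -/
noncomputable def sgx (σn : Fin T → ℝ) (t : ℕ) : ℝ := if h : t < T then σn ⟨t, h⟩ else 1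

lemma trC_meas : Measurable fun c : CT N T 𝒵 => c.1.2 (subIdx N c.1.1.1 (c.1.1.2 c.1.1.1)) :=
  smpJ_meas (by fun_prop) (evalU_meas.comp (by fun_prop)) (by fun_prop)

lemma ghC_meas : Measurable fun c : CT N T 𝒵 => c.1.2 (subIdx N c.1.1.1 (!c.1.1.2 c.1.1.1)) :=
  smpJ_meas (by fun_prop) ((measurable_of_countable (fun b : Bool => !b)).comp
    (evalU_meas.comp (by fun_prop : Measurable fun c : CT N T 𝒵 => c.1.1)))
    (by fun_prop)

lemma fC_meas {loss : EuclideanSpace ℝ (Fin d) → 𝒵 → ℝ}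
    (hloss : Measurable fun p : EuclideanSpace ℝ (Fin d) × 𝒵 => loss p.1 p.2) :
    Measurable fun p : CT N T 𝒵 × (ℕ → EuclideanSpace ℝ (Fin d)) => fC loss p.1 p.2 := by
  unfold fC
  have hx : Measurable fun p : CT N T 𝒵 × (ℕ → EuclideanSpace ℝ (Fin d)) => p.2 T := by fun_prop
  exact (hloss.comp (hx.prodMk (ghC_meas.comp measurable_fst))).sub
    (hloss.comp (hx.prodMk (trC_meas.comp measurable_fst)))

lemma fC_bd {loss : EuclideanSpace ℝ (Fin d) → 𝒵 → ℝ} {a b : ℝ}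
    (hab : ∀ θ z, loss θ z ∈ Set.Icc a b) (c : CT N T 𝒵) (x : ℕ → EuclideanSpace ℝ (Fin d)) :
    fC loss c x ∈ Set.Icc (-(b - a)) (b - a) := by
  unfold fC
  have h1 := hab (x T) (c.1.2 (subIdx N c.1.1.1 (!c.1.1.2 c.1.1.1)))
  have h2 := hab (x T) (c.1.2 (subIdx N c.1.1.1 (c.1.1.2 c.1.1.1)))
  constructor <;> linarith [h1.1, h1.2, h2.1, h2.2]

lemma fC_flip (loss : EuclideanSpace ℝ (Fin d) → 𝒵 → ℝ) (c : CT N T 𝒵)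
    (x : ℕ → EuclideanSpace ℝ (Fin d)) : fC loss (flipC c) x = - fC loss c x := by
  simp [fC, flipC, flipU]

lemma core_bound (ρ : Measure (EuclideanSpace ℝ (Fin d))) [IsProbabilityMeasure ρ]
    (hG : Measurable fun p : EuclideanSpace ℝ (Fin d) × 𝒵 => G p.1 p.2)
    (hP : ∀ t, Measurable fun p : CT N T 𝒵 × (ℕ → EuclideanSpace ℝ (Fin d)) => P t p.1 p.2)
    (hP01 : ∀ t c x, P t c x ∈ Set.Icc (0 : ℝ) 1)
    (L : ℝ) (hL : ∀ θ z, ‖G θ z‖ ≤ L) (hL0 : 0 ≤ L) (hη : ∀ t, 0 < η t)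
    (σn : Fin T → ℝ) (hσn : ∀ t, 0 < σn t)
    (loss : EuclideanSpace ℝ (Fin d) → 𝒵 → ℝ) (a b : ℝ) (hab' : a ≤ b)
    (hloss : Measurable fun p : EuclideanSpace ℝ (Fin d) × 𝒵 => loss p.1 p.2)
    (hab : ∀ θ z, loss θ z ∈ Set.Icc a b) (c : CT N T 𝒵) :
    ∫ x, fC loss c x ∂(trajK ρ (drA G η K) (sgx σn) T c) -
      ∫ x, fC loss c x ∂(trajK ρ (drB G η K P) (sgx σn) T c) ≤
    (2 * L / K) * (b - a) * Real.sqrt (∑ t : Fin T, if c.1.1.1 ∈ c.2 t then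
      ∫ x, (η t ^ 2 / σn t ^ 2) * ((if c.1.1.2 c.1.1.1 then (1 : ℝ) else 0) - P t c x) ^ 2
        ∂(trajK ρ (drA G η K) (sgx σn) t c) else 0) := by
  have hA : ∀ t, Measurable fun p : CT N T 𝒵 × (ℕ → EuclideanSpace ℝ (Fin d)) =>
    drA G η K t p.1 p.2 := fun t => drA_meas hG t
  have hB : ∀ t, Measurable fun p : CT N T 𝒵 × (ℕ → EuclideanSpace ℝ (Fin d)) =>
    drB G η K P t p.1 p.2 := fun t => drB_meas hG hP t
  have hmA := trajK_markov ρ _ (sgx σn) hA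
  have hmB := trajK_markov ρ _ (sgx σn) hB
  have hσ : ∀ t, 0 < sgx σn t := by
    intro t; unfold sgx
    by_cases h : t < T
    · simp [h, hσn]
    · simp [h]
  have hUP : ∀ t x, |(if c.1.1.2 c.1.1.1 then (1 : ℝ) else 0) - P t c x| ≤ 1 := by
    intro t x
    have := hP01 t c x
    rw [abs_le]
    split_ifs <;> constructor <;> linarith [this.1, this.2]
  have hM : ∀ t x, ‖drA G η K t c x - drB G η K P t c x‖ ≤
      if h : t < T then η ⟨t, h⟩ / K * (2 * L) else 0 := by
    intro t x
    by_cases h : t < T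
    · simp only [h, dite_true]
      refine (dr_diff L hL hη ⟨t, h⟩ c x).trans ?_
      have h0 : 0 ≤ η ⟨t, h⟩ / K * (2 * L) :=
        mul_nonneg (div_nonneg (hη _).le (by positivity)) (by linarith)
      by_cases hj : c.1.1.1 ∈ c.2 ⟨t, h⟩
      · rw [if_pos hj]
        exact mul_le_of_le_one_right h0 (hUP _ _)
      · rw [if_neg hj]
        exact h0
    · simp [drA, drB, h]
  have hDV := trajK_DV ρ _ _ (sgx σn) hA hB hσ c _ hM T
  have hpk := pinsker_aux (trajK ρ (drA G η K) (sgx σn) T c) (trajK ρ (drB G η K P) (sgx σn) T c)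
    (fC loss c) ((fC_meas hloss).comp (by fun_prop : Measurable fun x => (c, x))) (b - a)
    (by linarith) (fC_bd hab c) _
    (Finset.sum_nonneg fun s _ => integral_nonneg fun x => by positivity) hDV
  refine hpk.trans ?_
  have hba : 0 ≤ b - a := by linarith
  have hLK : 0 ≤ L / K := by positivity
  have hle : (∑ s ∈ Finset.range T, ∫ x, ‖drA G η K s c x - drB G η K P s c x‖ ^ 2 /
      (2 * sgx σn s ^ 2) ∂(trajK ρ (drA G η K) (sgx σn) s c)) / 2 ≤
      (L / K) ^ 2 * (∑ t : Fin T, if c.1.1.1 ∈ c.2 t then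
      ∫ x, (η t ^ 2 / σn t ^ 2) * ((if c.1.1.2 c.1.1.1 then (1 : ℝ) else 0) - P t c x) ^ 2
        ∂(trajK ρ (drA G η K) (sgx σn) t c) else 0) := by
    rw [Finset.sum_range, Finset.sum_div, Finset.mul_sum]
    refine Finset.sum_le_sum fun t _ => ?_
    have hPc : Measurable fun x => P t c x := (hP t).comp (by fun_prop : Measurable fun x => (c, x))
    have hst : sgx σn t = σn t := by simp [sgx]
    have hAc : Measurable fun x => drA G η K t c x := (hA t).comp (by fun_prop : Measurable fun x => (c, x))
    have hBc : Measurable fun x => drB G η K P t c x := (hB t).comp (by fun_prop : Measurable fun x => (c, x))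
    by_cases hj : c.1.1.1 ∈ c.2 t
    · simp only [hj, if_true]
      rw [← integral_div, ← integral_const_mul]
      refine integral_mono_of_nonneg (Filter.Eventually.of_forall fun x => by positivity) ?_
        (Filter.Eventually.of_forall fun x => ?_)
      · refine aux_int_bdd _ (by fun_prop) ((L / K) ^ 2 * (η t ^ 2 / σn t ^ 2)) fun x => ?_
        rw [abs_of_nonneg (by positivity)]
        refine mul_le_mul_of_nonneg_left ?_ (by positivity)
        refine mul_le_of_le_one_right (by positivity) ?_
        rw [← sq_abs]
        exact pow_le_one₀ (abs_nonneg _) (hUP t x)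
      · simp only
        have h := dr_diff (P := P) L hL hη t c x (K := K)
        rw [if_pos hj] at h
        have h2 := pow_le_pow_left₀ (norm_nonneg _) h 2
        rw [mul_pow, sq_abs] at h2
        rw [hst]
        have hs := hσn t
        rw [div_div, div_le_iff₀ (by positivity)]
        refine h2.trans (le_of_eq ?_)
        field_simp
        try ring
    · simp only [hj, if_false, mul_zero]
      have : ∀ x, drA G η K t c x - drB G η K P t c x = 0 := fun x => by
        have h := dr_diff (P := P) L hL hη t c x (K := K)
        rw [if_neg hj] at h
        exact norm_le_zero_iff.1 h
      simp [this]
  calc 2 * (b - a) * Real.sqrt _ ≤ 2 * (b - a) * Real.sqrt _ :=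
        mul_le_mul_of_nonneg_left (Real.sqrt_le_sqrt hle) (by linarith)
    _ = _ := by
      rw [Real.sqrt_mul (by positivity), Real.sqrt_sq hLK]
      ring

lemma core_flip (ρ : Measure (EuclideanSpace ℝ (Fin d))) [IsProbabilityMeasure ρ]
    (hG : Measurable fun p : EuclideanSpace ℝ (Fin d) × 𝒵 => G p.1 p.2)
    (hP : ∀ t, Measurable fun p : CT N T 𝒵 × (ℕ → EuclideanSpace ℝ (Fin d)) => P t p.1 p.2)
    (hPf : ∀ t c x, P t (flipC c) x = P t c x) (σ : ℕ → ℝ)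
    (loss : EuclideanSpace ℝ (Fin d) → 𝒵 → ℝ)
    (hloss : Measurable fun p : EuclideanSpace ℝ (Fin d) × 𝒵 => loss p.1 p.2)
    (m : Measure (CT N T 𝒵)) (hm : MeasurePreserving flipC m m) :
    ∫ c, ∫ x, fC loss c x ∂(trajK ρ (drB G η K P) σ T c) ∂m = 0 := by
  have hB : ∀ t, Measurable fun p : CT N T 𝒵 × (ℕ → EuclideanSpace ℝ (Fin d)) =>
    drB G η K P t p.1 p.2 := fun t => drB_meas hG hP t
  have hmB := trajK_markov ρ _ σ hB T
  have hms : StronglyMeasurable fun c => ∫ x, fC loss c x ∂(trajK ρ (drB G η K P) σ T c) :=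
    StronglyMeasurable.integral_kernel_prod_right (κ := trajK ρ (drB G η K P) σ T)
      (f := fun c x => fC loss c x) (fC_meas hloss).stronglyMeasurable
  have h1 : ∫ c, ∫ x, fC loss c x ∂(trajK ρ (drB G η K P) σ T c) ∂m =
      ∫ c, ∫ x, fC loss (flipC c) x ∂(trajK ρ (drB G η K P) σ T (flipC c)) ∂m := by
    rw [← integral_map (μ := m) (φ := flipC)
      (f := fun c => ∫ x, fC loss c x ∂(trajK ρ (drB G η K P) σ T c))
      hm.measurable.aemeasurable hms.aestronglyMeasurable, hm.map_eq]
  have h2 : ∀ c, ∫ x, fC loss (flipC c) x ∂(trajK ρ (drB G η K P) σ T (flipC c)) =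
      - ∫ x, fC loss c x ∂(trajK ρ (drB G η K P) σ T c) := fun c => by
    rw [trajK_congr ρ _ σ hB (flipC c) c (fun t x => drB_flip hPf t c x), ← integral_neg]
    simp_rw [fC_flip]
  simp_rw [h2] at h1
  rw [integral_neg] at h1
  linarith

lemma core_ghost (ρ : Measure (EuclideanSpace ℝ (Fin d))) [IsProbabilityMeasure ρ]
    (hG : Measurable fun p : EuclideanSpace ℝ (Fin d) × 𝒵 => G p.1 p.2) (σ : ℕ → ℝ)
    (loss : EuclideanSpace ℝ (Fin d) → 𝒵 → ℝ) (C : ℝ) (hC : ∀ x z, |loss x z| ≤ C)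
    (hloss : Measurable fun p : EuclideanSpace ℝ (Fin d) × 𝒵 => loss p.1 p.2)
    (PZ : Measure 𝒵) [IsProbabilityMeasure PZ]
    (m : Measure (CT N T 𝒵)) [IsProbabilityMeasure m]
    (hm : (m.prod PZ).map (fun p => ghostC p.1 p.2) = m) :
    ∫ c, ∫ x, ∫ z, loss (x T) z ∂PZ ∂(trajK ρ (drA G η K) σ T c) ∂m =
    ∫ c, ∫ x, loss (x T) (c.1.2 (subIdx N c.1.1.1 (!c.1.1.2 c.1.1.1)))
      ∂(trajK ρ (drA G η K) σ T c) ∂m := by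
  have hA : ∀ t, Measurable fun p : CT N T 𝒵 × (ℕ → EuclideanSpace ℝ (Fin d)) =>
    drA G η K t p.1 p.2 := fun t => drA_meas hG t
  have hmA := trajK_markov ρ _ σ hA T
  have hgm : Measurable fun p : CT N T 𝒵 × (ℕ → EuclideanSpace ℝ (Fin d)) =>
      loss (p.2 T) (p.1.1.2 (subIdx N p.1.1.1.1 (!p.1.1.1.2 p.1.1.1.1))) :=
    hloss.comp ((by fun_prop : Measurable fun p : CT N T 𝒵 × (ℕ → EuclideanSpace ℝ (Fin d)) =>
      p.2 T).prodMk (ghC_meas.comp measurable_fst))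
  have hms : StronglyMeasurable fun c : CT N T 𝒵 => ∫ x, loss (x T) (c.1.2 (subIdx N c.1.1.1 (!c.1.1.2 c.1.1.1)))
      ∂(trajK ρ (drA G η K) σ T c) :=
    StronglyMeasurable.integral_kernel_prod_right (κ := trajK ρ (drA G η K) σ T)
      (f := fun c x => loss (x T) (c.1.2 (subIdx N c.1.1.1 (!c.1.1.2 c.1.1.1)))) hgm.stronglyMeasurable
  have hgh := ghostC_meas (N := N) (T := T) (𝒵 := 𝒵)
  conv_rhs => rw [← hm]
  rw [integral_map hgh.aemeasurable hms.aestronglyMeasurable, integral_prod]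
  · refine integral_congr_ae (Filter.Eventually.of_forall fun c => ?_)
    simp only
    rw [integral_integral_swap]
    · refine integral_congr_ae (Filter.Eventually.of_forall fun z => ?_)
      simp only
      rw [trajK_congr ρ _ σ hA (ghostC c z) c (fun t x => drA_ghost t c z x)]
      simp [ghostC]
    · exact aux_int_bdd _ (hloss.comp (by fun_prop : Measurable fun p :
        (ℕ → EuclideanSpace ℝ (Fin d)) × 𝒵 => (p.1 T, p.2))) C fun _ => hC _ _
  · refine aux_int_bdd _ (hms.measurable.comp hgh) C fun p => ?_
    have hb := norm_integral_le_of_norm_le_const (C := C)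
      (μ := trajK ρ (drA G η K) σ T (ghostC p.1 p.2))
      (f := fun x => loss (x T) ((ghostC p.1 p.2).1.2 (subIdx N (ghostC p.1 p.2).1.1.1
        (!(ghostC p.1 p.2).1.1.2 (ghostC p.1 p.2).1.1.1))))
      (Filter.Eventually.of_forall fun x => hC _ _)
    simpa using hb

end core2
lemma law_int {Ω C H : Type*} [MeasurableSpace Ω] [MeasurableSpace C] [MeasurableSpace H]
    (μ : Measure Ω) [IsProbabilityMeasure μ] (c : Ω → C) (hc : Measurable c) (h : Ω → H)
    (hh : Measurable h) (κ : Kernel C H) [IsMarkovKernel κ]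
    (hl : μ.map (fun ω => (c ω, h ω)) = (μ.map c) ⊗ₘ κ) (F : C → H → ℝ)
    (hF : Measurable fun p : C × H => F p.1 p.2) (D : ℝ) (hD : ∀ c x, |F c x| ≤ D) :
    ∫ ω, F (c ω) (h ω) ∂μ = ∫ y, ∫ x, F y x ∂(κ y) ∂(μ.map c) := by
  have := Measure.isProbabilityMeasure_map (μ := μ) hc.aemeasurable
  have e : ∫ ω, F (c ω) (h ω) ∂μ = ∫ p, F p.1 p.2 ∂(μ.map (fun ω => (c ω, h ω))) := by
    rw [integral_map (hc.prodMk hh).aemeasurable hF.aestronglyMeasurable]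
  rw [e, hl, Measure.integral_compProd (aux_int_bdd _ hF D fun _ => hD _ _)]

lemma condExp_id {Ω C H : Type*} [MeasurableSpace Ω] [mC : MeasurableSpace C] [MeasurableSpace H]
    [StandardBorelSpace H] [Nonempty H]
    (μ : Measure Ω) [IsProbabilityMeasure μ] (c : Ω → C) (hc : Measurable c) (h : Ω → H)
    (hh : Measurable h) (κ : Kernel C H) [IsMarkovKernel κ]
    (hl : μ.map (fun ω => (c ω, h ω)) = (μ.map c) ⊗ₘ κ) (F : C → H → ℝ)
    (hF : Measurable fun p : C × H => F p.1 p.2) (D : ℝ) (hD : ∀ c x, |F c x| ≤ D) :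
    μ[fun ω => F (c ω) (h ω) | mC.comap c] =ᵐ[μ] fun ω => ∫ x, F (c ω) x ∂(κ (c ω)) := by
  have h1 := condExp_prod_ae_eq_integral_condDistrib (μ := μ) hc hh.aemeasurable
    (f := fun p : C × H => F p.1 p.2) hF.stronglyMeasurable
    (aux_int_bdd _ (hF.comp (hc.prodMk hh)) D fun _ => hD _ _)
  have h2 := condDistrib_ae_eq_of_measure_eq_compProd (μ := μ) c hh.aemeasurable hl
  have h3 := ae_of_ae_map hc.aemeasurable h2
  filter_upwards [h1, h3] with ω e1 e2
  rw [e1, e2]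

lemma P_ex {𝒵 : Type*} [MeasurableSpace 𝒵] {Ω : Type*} [MeasurableSpace Ω] (N d T : ℕ)
    (St : Ω → Fin (2 * N) → 𝒵) (U : Ω → Fin N → Bool)
    (V : Fin T → Ω → Finset (Fin N))
    (θ : ℕ → Ω → EuclideanSpace ℝ (Fin d)) (J : Ω → Fin N)
    (π : Fin T → Ω → ℝ) (hπ01 : ∀ t ω, π t ω ∈ Set.Icc (0 : ℝ) 1)
    (hπ : ∀ t : Fin T,
      Measurable[MeasurableSpace.comap (fun ω =>
        ((((fun k : Fin (t.val + 1) => θ k.val ω), J ω), St ω),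
          ((fun i : Fin N => if i = J ω then none else some (U ω i)),
            (fun k : Fin (t.val + 1) =>
              V ⟨k.val, lt_of_le_of_lt (Nat.lt_succ_iff.mp k.isLt) t.isLt⟩ ω)))) inferInstance]
        (π t)) :
    ∃ P : Fin T → CT N T 𝒵 → (ℕ → EuclideanSpace ℝ (Fin d)) → ℝ,
      (∀ t, Measurable fun p : CT N T 𝒵 × (ℕ → EuclideanSpace ℝ (Fin d)) => P t p.1 p.2) ∧
      (∀ t c x, P t c x ∈ Set.Icc (0 : ℝ) 1) ∧
      (∀ t c x, P t (flipC c) x = P t c x) ∧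
      ∀ t ω, π t ω = P t (((J ω, U ω), St ω), fun s => V s ω) (fun k => θ (min k t.val) ω) := by
  have hex := fun t => (hπ t).exists_eq_measurable_comp
  choose p hp hpe using hex
  refine ⟨fun t c x => max 0 (min 1 (p t ((((fun k : Fin (t.val + 1) => x k.val), c.1.1.1), c.1.2),
          ((fun i : Fin N => if i = c.1.1.1 then none else some (c.1.1.2 i)),
            (fun k : Fin (t.val + 1) =>
              c.2 ⟨k.val, lt_of_le_of_lt (Nat.lt_succ_iff.mp k.isLt) t.isLt⟩))))), ?_, ?_, ?_, ?_⟩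
  · intro t
    refine measurable_const.max (measurable_const.min ((hp t).comp ?_))
    have hq : Measurable fun q : Fin N × (Fin N → Bool) => fun i : Fin N =>
      if i = q.1 then none else some (q.2 i) := measurable_of_countable _
    refine Measurable.prodMk (Measurable.prodMk (Measurable.prodMk ?_ ?_) ?_)
      (Measurable.prodMk ?_ ?_)
    · fun_prop
    · fun_prop
    · fun_prop
    · exact hq.comp (by fun_prop : Measurable fun p : CT N T 𝒵 ×
        (ℕ → EuclideanSpace ℝ (Fin d)) => p.1.1.1)
    · fun_prop
  · intro t c x
    exact ⟨le_max_left _ _, max_le zero_le_one (min_le_left _ _)⟩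
  · intro t c x
    have : (fun i : Fin N => if i = (flipC c).1.1.1 then none else some ((flipC c).1.1.2 i)) =
        fun i : Fin N => if i = c.1.1.1 then none else some (c.1.1.2 i) := by
      funext i
      by_cases hi : i = c.1.1.1
      · simp [flipC, flipU, hi]
      · simp [flipC, flipU, hi]
    simp only [this]
    rfl
  · intro t ω
    have h1 := congrFun (hpe t) ω
    have h2 := hπ01 t ω
    have h3 : (fun k : Fin (t.val + 1) => θ (min k.val t.val) ω) = fun k => θ k.val ω := by
      funext k
      rw [min_eq_left (Nat.lt_succ_iff.mp k.isLt)]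
    simp only [Function.comp] at h1
    simp only [h3]
    rw [← h1, min_eq_right h2.2, max_eq_right h2.1]

/-- Corollary 1, Lipschitz case with constant batch size:
`E[gen(W,S)] ≤ (2L/K)(b−a) E_{(J,S̃,U,V^T)}[ sqrt( Σ_{t ∈ 𝒯_J(V^T)}
E_t[ (η_t²/σ_t²) (U_J − π_{J,t})² ] ) ]`. -/
theorem stmt15
    {𝒵 : Type*} [MeasurableSpace 𝒵] [StandardBorelSpace 𝒵] [Nonempty 𝒵]
    {Ω : Type*} [MeasurableSpace Ω] (μ : Measure Ω) [IsProbabilityMeasure μ]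
    (N d T : ℕ) (hN : 0 < N)
    (PZ : Measure 𝒵) [IsProbabilityMeasure PZ]
    (St : Ω → Fin (2 * N) → 𝒵) (U : Ω → Fin N → Bool)
    (hSt : Measurable St) (hU : Measurable U)
    -- `S̃` is i.i.d. `P_Z`, `U` is i.i.d. Bernoulli(1/2), and they are independent
    (hlaw : μ.map (fun ω => (St ω, U ω)) =
      (Measure.pi fun _ : Fin (2 * N) => PZ).prod (Measure.pi fun _ : Fin N => bern))
    -- the loss, bounded in `[a,b]`, and its gradient in the parameter
    (loss : EuclideanSpace ℝ (Fin d) → 𝒵 → ℝ) (a b : ℝ)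
    (hloss : Measurable fun p : EuclideanSpace ℝ (Fin d) × 𝒵 => loss p.1 p.2)
    (hab : ∀ θ z, loss θ z ∈ Set.Icc a b)
    (G : EuclideanSpace ℝ (Fin d) → 𝒵 → EuclideanSpace ℝ (Fin d))
    (hG : Measurable fun p : EuclideanSpace ℝ (Fin d) × 𝒵 => G p.1 p.2)
    (hgrad : ∀ (z : 𝒵) (θ₀ : EuclideanSpace ℝ (Fin d)),
      HasGradientAt (fun θ' => loss θ' z) (G θ₀ z) θ₀)
    -- batches, iterates, noise, step sizes and noise levels
    (V : Fin T → Ω → Finset (Fin N)) (hV : ∀ t, Measurable (V t))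
    (hVne : ∀ t ω, (V t ω).Nonempty)
    -- the loss is `L`-Lipschitz in the parameter and all batches have constant size `K`
    (L : ℝ) (hL : ∀ θ₀ z, ‖G θ₀ z‖ ≤ L)
    (K : ℕ) (hK : 0 < K) (hVcard : ∀ t ω, (V t ω).card = K)
    (θ : ℕ → Ω → EuclideanSpace ℝ (Fin d)) (hθ : ∀ t, Measurable (θ t))
    (ε : Fin T → Ω → EuclideanSpace ℝ (Fin d)) (hε : ∀ t, Measurable (ε t))
    (η σn : Fin T → ℝ) (hη : ∀ t, 0 < η t) (hσn : ∀ t, 0 < σn t)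
    -- the batches are independent of `(S̃, U)`
    (hVindep : IndepFun (fun ω => (St ω, U ω)) (fun ω => fun t => V t ω) μ)
    -- the initialization is independent of `(S̃, U, V^T)`
    (hθ0indep : IndepFun (fun ω => ((St ω, U ω), fun t => V t ω)) (θ 0) μ)
    -- the Gaussian noises are i.i.d. standard normal …
    (hεlaw : μ.map (fun ω => fun p : Fin T × Fin d => ε p.1 ω p.2) =
      Measure.pi fun _ : Fin T × Fin d => gaussianReal 0 1)
    -- … and independent of everything else
    (hεindep : IndepFun (fun ω => (((St ω, U ω), fun t => V t ω), θ 0 ω))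
      (fun ω => fun p : Fin T × Fin d => ε p.1 ω p.2) μ)
    -- the SGLD recursion
    (hrec : ∀ (t : Fin T) (ω : Ω),
      θ (t.val + 1) ω =
        θ t.val ω - (η t / ((V t ω).card : ℝ)) •
            (∑ i ∈ V t ω, G (θ t.val ω) (St ω (subIdx N i (U ω i)))) +
          σn t • ε t ω)
    -- `J` is uniform on `{1,…,N}` and independent of everything else
    (J : Ω → Fin N) (hJ : Measurable J)
    (hJunif : ∀ j : Fin N, μ (J ⁻¹' {j}) = 1 / N)
    (hJindep : IndepFun
      (fun ω => ((((St ω, U ω), fun t => V t ω), θ 0 ω),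
        fun p : Fin T × Fin d => ε p.1 ω p.2)) J μ)
    -- the estimates `π_{J,t} ∈ [0,1]`, measurable w.r.t. `(θ^{t−1}, J, S̃, U_{J^c}, V^t)`
    (π : Fin T → Ω → ℝ) (hπ01 : ∀ t ω, π t ω ∈ Set.Icc (0 : ℝ) 1)
    (hπ : ∀ t : Fin T,
      Measurable[MeasurableSpace.comap (fun ω =>
        ((((fun k : Fin (t.val + 1) => θ k.val ω), J ω), St ω),
          ((fun i : Fin N => if i = J ω then none else some (U ω i)),
            (fun k : Fin (t.val + 1) =>
              V ⟨k.val, lt_of_le_of_lt (Nat.lt_succ_iff.mp k.isLt) t.isLt⟩ ω)))) inferInstance]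
        (π t)) :
    ∫ ω, ((∫ z, loss (θ T ω) z ∂PZ) -
        (1 / N : ℝ) * ∑ i, loss (θ T ω) (St ω (subIdx N i (U ω i)))) ∂μ ≤
      (2 * L / K) * (b - a) *
        ∫ ω, Real.sqrt (∑ t : Fin T,
          if J ω ∈ V t ω then
            (μ[fun ω' =>
                (η t ^ 2 / σn t ^ 2) *
                ((if U ω' (J ω') then (1 : ℝ) else 0) - π t ω') ^ 2
              | MeasurableSpace.comap
                  (fun ω'' => (((J ω'', U ω''), St ω''), fun s => V s ω''))
                  inferInstance]) ω
          else 0) ∂μ := by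
  have hVm : Measurable fun ω => fun t => V t ω := measurable_pi_lambda _ hV
  set E : Ω → Fin T × Fin d → ℝ := fun ω p => ε p.1 ω p.2 with hE
  have hEm : Measurable E := by
    refine measurable_pi_lambda _ fun p => ?_
    have := hε p.1
    simp only [hE]
    fun_prop
  set c : Ω → CT N T 𝒵 := fun ω => (((J ω, U ω), St ω), fun s => V s ω) with hcdef
  have hc : Measurable c := by simp only [hcdef]; fun_prop
  set hist : ℕ → Ω → ℕ → EuclideanSpace ℝ (Fin d) := fun t ω k => θ (min k t) ω with hhist
  have hh : ∀ t, Measurable (hist t) := fun t => measurable_pi_lambda _ fun k => hθ _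
  obtain ⟨P, hP, hP01, hPf, hPe⟩ := P_ex N d T St U V θ J π hπ01 hπ
  have hρp := Measure.isProbabilityMeasure_map (μ := μ) (hθ 0).aemeasurable
  have hθ0 := hθ 0
  set ρ := μ.map (θ 0) with hρ
  have hA : ∀ t, Measurable fun p : CT N T 𝒵 × (ℕ → EuclideanSpace ℝ (Fin d)) =>
    drA G η K t p.1 p.2 := fun t => drA_meas hG t
  have hB : ∀ t, Measurable fun p : CT N T 𝒵 × (ℕ → EuclideanSpace ℝ (Fin d)) =>
    drB G η K P t p.1 p.2 := fun t => drB_meas hG hP t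
  have hmA := trajK_markov ρ _ (sgx σn) hA
  have hmB := trajK_markov ρ _ (sgx σn) hB
  have h0 : ∀ ω, hist 0 ω = fun _ => θ 0 ω := fun ω => by
    funext k; simp [hhist]
  -- recursion for histories, for any index `j`
  have hrecj : ∀ (j : Ω → Fin N) (t : ℕ) (ht : t < T), ∀ ω, hist (t + 1) ω =
      stp t (hist t ω) (drA G η K t ((((j ω, U ω), St ω), fun s => V s ω) : CT N T 𝒵) (hist t ω) +
        sgx σn t • WithLp.toLp 2 (fun i => E ω (⟨t, ht⟩, i))) := by
    intro j t ht ω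
    funext k
    unfold stp
    by_cases hk : k ≤ t
    · simp [hhist, hk, Nat.le_succ_of_le hk]
    · have hk' : t + 1 ≤ k := by omega
      simp only [hk, if_false]
      have hr := hrec ⟨t, ht⟩ ω
      simp only [hVcard] at hr
      simp only [hhist, min_eq_right hk', hr, drA, ht, dite_true, sgx, min_self]
      rfl
  -- independence
  have iJ1 : IndepFun (fun ω => ((((St ω, U ω), fun t => V t ω)), θ 0 ω)) J μ :=
    hJindep.comp (φ := Prod.fst) measurable_fst measurable_id
  have iJ2 : IndepFun (fun ω => ((St ω, U ω), fun t => V t ω)) J μ :=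
    iJ1.comp (φ := Prod.fst) measurable_fst measurable_id
  have ic0 : IndepFun c (θ 0) μ := by
    have h1 := indep_swap μ (by fun_prop) hθ0 hJ hθ0indep iJ1
    exact h1.comp (φ := fun p => (((p.2, p.1.1.2), p.1.1.1), p.1.2)) (by fun_prop) measurable_id
  have icE : IndepFun (fun ω => (c ω, θ 0 ω)) E μ := by
    have h1 := indep_swap μ (by fun_prop) hEm hJ hεindep hJindep
    exact h1.comp (φ := fun p => ((((p.2, p.1.1.1.2), p.1.1.1.1), p.1.1.2), p.1.2))
      (by fun_prop) measurable_id
  have hrow : ∀ t : Fin T, Measurable fun ω => fun i => E ω (t, i) := fun t => by fun_prop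
  have hind : ∀ (t : ℕ) (ht : t < T),
      IndepFun (fun ω => (c ω, hist t ω)) (fun ω => fun i => E ω (⟨t, ht⟩, i)) μ := by
    intro t ht
    obtain ⟨n1, n2⟩ := noise_split μ E hEm hεlaw ⟨t, ht⟩
    have hmk := maskN_meas (T := T) (d := d) t
    have h2 : IndepFun (fun ω => (maskN t (E ω), fun i => E ω ((⟨t, ht⟩ : Fin T), i)))
        (fun ω => (c ω, θ 0 ω)) μ :=
      icE.symm.comp (φ := fun e => (maskN t e, fun i => e ((⟨t, ht⟩ : Fin T), i)))
        (by fun_prop) measurable_id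
    have h3 := indep_swap μ (hmk.comp hEm) (hrow ⟨t, ht⟩) (hc.prodMk hθ0) n1 h2
    obtain ⟨Φ, hΦ, hΦe⟩ := hist_ex (drA G η K) (sgx σn) hA c hist (θ 0) h0 E (hrecj J) t ht.le
    have h4 := h3.comp (φ := fun q => (q.2.1, Φ (q.2, q.1))) (by fun_prop) measurable_id
    simp only [hΦe]
    exact h4
  have hlawT : ∀ t ≤ T, μ.map (fun ω => (c ω, hist t ω)) =
      (μ.map c) ⊗ₘ (trajK ρ (drA G η K) (sgx σn) t) := by
    refine fun t ht => trajK_law ρ (drA G η K) (sgx σn) hA μ c hc T hist hh (θ 0) hθ0 rfl h0 ic0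
      (fun t ω => if h : t < T then fun i => E ω (⟨t, h⟩, i) else 0) ?_ ?_ ?_ ?_ t ht
    · intro t ht; simp only [ht, dite_true]; exact hrow _
    · intro t ht; simp only [ht, dite_true]; exact (noise_split μ E hEm hεlaw ⟨t, ht⟩).2
    · intro t ht; simp only [ht, dite_true]; exact hind t ht
    · intro t ht ω; simp only [ht, dite_true]; exact hrecj J t ht ω
  -- law of the conditioning data
  have hmJ := Measure.isProbabilityMeasure_map (μ := μ) hJ.aemeasurable
  have hmV := Measure.isProbabilityMeasure_map (μ := μ) hVm.aemeasurable
  have hmc := Measure.isProbabilityMeasure_map (μ := μ) hc.aemeasurable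
  have hlc := law_c μ St U (fun ω => fun t => V t ω) J hSt hU hVm hJ _ _ hlaw hVindep iJ2
  have hflip : MeasurePreserving flipC (μ.map c) (μ.map c) := by
    rw [hlc]; exact flipC_mp _ _ _
  have hghost : ((μ.map c).prod PZ).map (fun p => ghostC p.1 p.2) = μ.map c := by
    rw [hlc]; exact ghostC_mp _ _ _
  -- constants
  obtain ⟨z0⟩ := (inferInstance : Nonempty 𝒵)
  have hL0 : 0 ≤ L := (norm_nonneg _).trans (hL 0 z0)
  have hab' : a ≤ b := (hab 0 z0).1.trans (hab 0 z0).2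
  set D := max |a| |b| with hD
  have hlD : ∀ x z, |loss x z| ≤ D := fun x z => abs_le_max_abs_abs (hab x z).1 (hab x z).2
  have hθT := hθ T
  have hhT : ∀ ω, hist T ω T = θ T ω := fun ω => by simp [hhist]
  have hzm : Measurable fun x : EuclideanSpace ℝ (Fin d) => ∫ z, loss x z ∂PZ :=
    (hloss.stronglyMeasurable.integral_prod_right).measurable
  have hzD : ∀ x, |∫ z, loss x z ∂PZ| ≤ D := fun x => by
    have hb := norm_integral_le_of_norm_le_const (C := D) (μ := PZ) (f := fun z => loss x z)
      (Filter.Eventually.of_forall fun z => hlD x z)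
    simpa using hb
  have htr : ∀ i, Measurable fun ω => loss (θ T ω) (St ω (subIdx N i (U ω i))) := fun i =>
    hloss.comp (hθT.prodMk (smp_meas (by fun_prop) hSt i))
  have hpop : ∫ ω, ∫ z, loss (θ T ω) z ∂PZ ∂μ = ∫ y, ∫ x, loss (x T)
      (y.1.2 (subIdx N y.1.1.1 (!y.1.1.2 y.1.1.1))) ∂(trajK ρ (drA G η K) (sgx σn) T y) ∂(μ.map c) := by
    rw [← core_ghost ρ hG (sgx σn) loss D hlD hloss PZ (μ.map c) hghost]
    have := law_int μ c hc (hist T) (hh T) _ (hlawT T le_rfl)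
      (fun _ x => ∫ z, loss (x T) z ∂PZ) (hzm.comp (by fun_prop)) D (fun _ _ => hzD _)
    simpa only [hhT] using this
  have hgm : Measurable fun p : CT N T 𝒵 × (ℕ → EuclideanSpace ℝ (Fin d)) =>
      loss (p.2 T) (p.1.1.2 (subIdx N p.1.1.1.1 (!p.1.1.1.2 p.1.1.1.1))) :=
    hloss.comp ((by fun_prop : Measurable fun p : CT N T 𝒵 × (ℕ → EuclideanSpace ℝ (Fin d)) =>
      p.2 T).prodMk (ghC_meas.comp measurable_fst))
  have htm : Measurable fun p : CT N T 𝒵 × (ℕ → EuclideanSpace ℝ (Fin d)) =>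
      loss (p.2 T) (p.1.1.2 (subIdx N p.1.1.1.1 (p.1.1.1.2 p.1.1.1.1))) :=
    hloss.comp ((by fun_prop : Measurable fun p : CT N T 𝒵 × (ℕ → EuclideanSpace ℝ (Fin d)) =>
      p.2 T).prodMk (trC_meas.comp measurable_fst))
  have hpop' : ∫ ω, ∫ z, loss (θ T ω) z ∂PZ ∂μ =
      ∫ ω, loss (θ T ω) (St ω (subIdx N (J ω) (!U ω (J ω)))) ∂μ := by
    rw [hpop]
    have := law_int μ c hc (hist T) (hh T) _ (hlawT T le_rfl) (fun y x => loss (x T)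
      (y.1.2 (subIdx N y.1.1.1 (!y.1.1.2 y.1.1.1)))) hgm D (fun _ _ => hlD _ _)
    simp only [hhT] at this
    rw [← this]
  have htrain : ∫ ω, (1 / N : ℝ) * ∑ i, loss (θ T ω) (St ω (subIdx N i (U ω i))) ∂μ =
      ∫ ω, loss (θ T ω) (St ω (subIdx N (J ω) (U ω (J ω)))) ∂μ := by
    obtain ⟨Φ, hΦ, hΦe⟩ := hist_ex (drA G η K) (sgx σn) hA
      (fun ω => ((((⟨0, hN⟩ : Fin N), U ω), St ω), fun s => V s ω)) hist (θ 0) h0 E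
      (hrecj fun _ => ⟨0, hN⟩) T le_rfl
    have hmk := maskN_meas (T := T) (d := d) T
    have hindX : IndepFun (fun ω => (θ T ω, (St ω, U ω))) J μ := by
      have h4 := hJindep.comp (φ := fun q =>
        (Φ ((((((⟨0, hN⟩ : Fin N), q.1.1.1.2), q.1.1.1.1), q.1.1.2), q.1.2), maskN T q.2) T,
          q.1.1.1)) (by fun_prop) measurable_id
      have : (fun ω => (θ T ω, (St ω, U ω))) = fun ω => (hist T ω T, (St ω, U ω)) := by
        simp only [hhT]
      rw [this]
      simp only [hΦe]
      exact h4
    exact unif_int μ J hJ hJunif (fun ω => (θ T ω, (St ω, U ω))) (by fun_prop) hindX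
      (fun i q => loss q.1 (q.2.1 (subIdx N i (q.2.2 i))))
      (fun i => hloss.comp ((by fun_prop : Measurable fun q : EuclideanSpace ℝ (Fin d) ×
        ((Fin (2 * N) → 𝒵) × (Fin N → Bool)) => q.1).prodMk
          (smp_meas (by fun_prop) (by fun_prop) i))) D (fun _ _ => hlD _ _)
  have hLHS : ∫ ω, ((∫ z, loss (θ T ω) z ∂PZ) -
        (1 / N : ℝ) * ∑ i, loss (θ T ω) (St ω (subIdx N i (U ω i)))) ∂μ =
      ∫ y, ∫ x, fC loss y x ∂(trajK ρ (drA G η K) (sgx σn) T y) ∂(μ.map c) := by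
    rw [integral_sub, hpop', htrain, ← integral_sub]
    · rw [← law_int μ c hc (hist T) (hh T) _ (hlawT T le_rfl) (fun y x => fC loss y x)
        (fC_meas hloss) (b - a) (fun y x => abs_le.2 (fC_bd hab y x))]
      refine integral_congr_ae (Filter.Eventually.of_forall fun ω => ?_)
      simp only [fC, hhT]
      rfl
    · have := hgm.comp (hc.prodMk (hh T))
      refine aux_int_bdd μ (C := D) (?_) ?_
      · convert this using 2
        simp [hhT]
        rfl
      · exact fun ω => hlD _ _
    · have := htm.comp (hc.prodMk (hh T))
      refine aux_int_bdd μ (C := D) (?_) ?_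
      · convert this using 2
        simp [hhT]
        rfl
      · exact fun ω => hlD _ _
    · exact aux_int_bdd μ (hzm.comp hθT) D fun ω => hzD _
    · refine Integrable.const_mul (integrable_finset_sum _ fun i _ => ?_) _
      exact aux_int_bdd μ (htr i) D fun ω => hlD _ _
  -- the right-hand side
  have hUP : ∀ t (y : CT N T 𝒵) x, |(if y.1.1.2 y.1.1.1 then (1 : ℝ) else 0) - P t y x| ≤ 1 := by
    intro t y x
    have := hP01 t y x
    rw [abs_le]
    split_ifs <;> constructor <;> linarith [this.1, this.2]
  have hum : Measurable fun y : CT N T 𝒵 => (if y.1.1.2 y.1.1.1 then (1 : ℝ) else 0) :=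
    (measurable_of_countable (fun q : Fin N × (Fin N → Bool) =>
      (if q.2 q.1 then (1 : ℝ) else 0))).comp (by fun_prop : Measurable fun y : CT N T 𝒵 => y.1.1)
  set Y : Fin T → CT N T 𝒵 → (ℕ → EuclideanSpace ℝ (Fin d)) → ℝ := fun t y x =>
    (η t ^ 2 / σn t ^ 2) * ((if y.1.1.2 y.1.1.1 then (1 : ℝ) else 0) - P t y x) ^ 2 with hY
  have hYm : ∀ t, Measurable fun p : CT N T 𝒵 × (ℕ → EuclideanSpace ℝ (Fin d)) =>
      Y t p.1 p.2 := fun t => by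
    have h1 := hP t
    have h2 := hum.comp (by fun_prop : Measurable fun p : CT N T 𝒵 ×
      (ℕ → EuclideanSpace ℝ (Fin d)) => p.1)
    exact ((h2.sub h1).pow_const 2).const_mul _
  have hYb : ∀ t y x, |Y t y x| ≤ η t ^ 2 / σn t ^ 2 := fun t y x => by
    simp only [hY]
    rw [abs_of_nonneg (by positivity)]
    refine mul_le_of_le_one_right (by positivity) ?_
    rw [← sq_abs]
    exact pow_le_one₀ (abs_nonneg _) (hUP t y x)
  set Q : CT N T 𝒵 → ℝ := fun y => Real.sqrt (∑ t : Fin T, if y.1.1.1 ∈ y.2 t then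
      ∫ x, Y t y x ∂(trajK ρ (drA G η K) (sgx σn) t y) else 0) with hQ
  have hYi : ∀ t : Fin T, Measurable fun y =>
      ∫ x, Y t y x ∂(trajK ρ (drA G η K) (sgx σn) t y) := fun t =>
    (StronglyMeasurable.integral_kernel_prod_right (κ := trajK ρ (drA G η K) (sgx σn) t)
      (f := fun y x => Y t y x) (hYm t).stronglyMeasurable).measurable
  have hdF := finset_discrete N
  have hQm : Measurable Q := by
    refine Measurable.sqrt (Finset.measurable_sum _ fun t _ => Measurable.ite ?_ (hYi t)
      measurable_const)
    have : Measurable fun y : CT N T 𝒵 => (y.1.1.1, y.2 t) := by fun_prop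
    exact this (t := {q | q.1 ∈ q.2}) (MeasurableSet.of_discrete)
  have hYib : ∀ (t : Fin T) y, |∫ x, Y t y x ∂(trajK ρ (drA G η K) (sgx σn) t y)| ≤
      η t ^ 2 / σn t ^ 2 := fun t y => by
    have := hmA t
    have hb := norm_integral_le_of_norm_le_const (C := η t ^ 2 / σn t ^ 2)
      (μ := trajK ρ (drA G η K) (sgx σn) t y) (f := fun x => Y t y x)
      (Filter.Eventually.of_forall fun x => hYb t y x)
    simpa using hb
  have hQb : ∀ y, |Q y| ≤ Real.sqrt (∑ t : Fin T, η t ^ 2 / σn t ^ 2) := fun y => by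
    rw [abs_of_nonneg (Real.sqrt_nonneg _)]
    refine Real.sqrt_le_sqrt (Finset.sum_le_sum fun t _ => ?_)
    by_cases hj : y.1.1.1 ∈ y.2 t
    · rw [if_pos hj]
      exact (le_abs_self _).trans (hYib t y)
    · rw [if_neg hj]
      positivity
  have hRHS : ∫ ω, Real.sqrt (∑ t : Fin T,
          if J ω ∈ V t ω then
            (μ[fun ω' =>
                (η t ^ 2 / σn t ^ 2) *
                ((if U ω' (J ω') then (1 : ℝ) else 0) - π t ω') ^ 2
              | MeasurableSpace.comap
                  (fun ω'' => (((J ω'', U ω''), St ω''), fun s => V s ω''))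
                  inferInstance]) ω
          else 0) ∂μ = ∫ y, Q y ∂(μ.map c) := by
    rw [integral_map hc.aemeasurable hQm.aestronglyMeasurable]
    have hce : ∀ t : Fin T, _ := fun t =>
      condExp_id μ c hc (hist t) (hh t) _ (hlawT t t.isLt.le) (Y t) (hYm t) _ (hYb t)
    have hce' := ae_all_iff.2 hce
    refine integral_congr_ae ?_
    filter_upwards [hce'] with ω hω
    simp only [hQ]
    congr 1
    refine Finset.sum_congr rfl fun t _ => ?_
    by_cases hj : J ω ∈ V t ω
    · rw [if_pos hj, if_pos (by exact hj), ← hω t]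
      simp only [hPe]
      rfl
    · rw [if_neg hj, if_neg (by exact hj)]
  rw [hLHS, hRHS, ← integral_const_mul]
  have hfl := core_flip ρ hG hP hPf (sgx σn) loss hloss (μ.map c) hflip (η := η) (K := K)
  rw [← sub_zero (∫ y, ∫ x, fC loss y x ∂(trajK ρ (drA G η K) (sgx σn) T y) ∂(μ.map c)), ← hfl]
  have hIntg : ∀ κ : Kernel (CT N T 𝒵) (ℕ → EuclideanSpace ℝ (Fin d)), IsMarkovKernel κ →
      Integrable (fun y => ∫ x, fC loss y x ∂(κ y)) (μ.map c) := fun κ _ => by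
    refine aux_int_bdd _ (StronglyMeasurable.integral_kernel_prod_right (κ := κ)
      (f := fun y x => fC loss y x) (fC_meas hloss).stronglyMeasurable).measurable (b - a)
      fun y => ?_
    have hb := norm_integral_le_of_norm_le_const (C := b - a)
      (μ := κ y) (f := fun x => fC loss y x)
      (Filter.Eventually.of_forall fun x => abs_le.2 (fC_bd hab y x))
    simpa using hb
  rw [← integral_sub (hIntg _ (hmA T)) (hIntg _ (hmB T))]
  refine integral_mono ((hIntg _ (hmA T)).sub (hIntg _ (hmB T)))
    ((aux_int_bdd _ hQm _ hQb).const_mul _) fun y => ?_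
  exact core_bound ρ hG hP hP01 L hL hL0 hη σn hσn loss a b hab' hloss hab y
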